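/- arXiv:2104.11836 — 5 statements merged into one kernel-verified Lean document; each statement's English description precedes it below -/
import Mathlib

section
/- (Green's general hyperplane restriction theorem) Let R be a standard graded algebra over an infinite field K and let d be a positive integer. Then for a general linear form l of R one has dim_K (R/lR)_d ≤ (dim_K R_d)_{⟨d⟩}; that is, there exists a nonempty Zariski open subset U ⊆ 𝔸(R_1) such that for every linear form l ∈ U the inequality dim_K (R/lR)_d ≤ (dim_K R_d)_{⟨d⟩} holds. -/
/-- Polynomial functions on a `K`-vector space `V`: the subalgebra of `V → K`
generated by the linear functionals. -/
def polyFuns (K V : Type*) [Field K] [AddCommGroup V] [Module K V] : Subalgebra K (V → K) :=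
  Algebra.adjoin K {f : V → K | ∃ φ : V →ₗ[K] K, ⇑φ = f}

/-- A subset of (the affine space of) a `K`-vector space is Zariski closed if it is the
common zero locus of a family of polynomial functions. -/
def IsZClosed (K : Type*) {V : Type*} [Field K] [AddCommGroup V] [Module K V]
    (Z : Set V) : Prop :=
  ∃ S : Set (V → K), (∀ f ∈ S, f ∈ polyFuns K V) ∧ Z = {v | ∀ f ∈ S, f v = 0}

/-- A subset is Zariski open if its complement is Zariski closed. -/
def IsZOpen (K : Type*) {V : Type*} [Field K] [AddCommGroup V] [Module K V]
    (U : Set V) : Prop :=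
  IsZClosed K Uᶜ

/-- An irreducible variety: a nonempty Zariski closed set which is not the union of two
proper closed subsets. -/
def IsIrredVariety (K : Type*) {V : Type*} [Field K] [AddCommGroup V] [Module K V]
    (W : Set V) : Prop :=
  IsZClosed K W ∧ W.Nonempty ∧
    ∀ Z₁ Z₂ : Set V, IsZClosed K Z₁ → IsZClosed K Z₂ → W ⊆ Z₁ ∪ Z₂ → (W ⊆ Z₁ ∨ W ⊆ Z₂)

/-- Auxiliary recursion for `wordIdeal`: letters are booleans, `true` standing for the
letter `c` (colon) and `false` for the letter `s` (sum). The natural number argument keeps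
track of which linear form is to be used next (0-indexed). -/
def wordIdealAux {R : Type*} [CommRing R] (l : ℕ → R) : ℕ → Ideal R → List Bool → Ideal R
  | _, I, [] => I
  | j, I, a :: o =>
      wordIdealAux l (j + 1)
        (if a then I.colon (Ideal.span {l j}) else I ⊔ Ideal.span {l j}) o

/-- The ideal `I_{l,o}` attached to a sequence of (linear) forms `l` and a word `o` in the
letters `{c, s}` (here `c = true`, `s = false`): starting from `(0)`, the `j`-th letter
either colons (`c`) or adds (`s`) the `j`-th form. -/
def wordIdeal {R : Type*} [CommRing R] (l : ℕ → R) (o : List Bool) : Ideal R :=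
  wordIdealAux l 0 ⊥ o

/-- The degree `d` component `I ∩ R_d` of an ideal `I`, as a `K`-subspace of `𝒜 d`. -/
def homComp {K R : Type*} [Field K] [CommRing R] [Algebra K R]
    (𝒜 : ℕ → Submodule K R) (I : Ideal R) (d : ℕ) : Submodule K (𝒜 d) :=
  Submodule.comap (𝒜 d).subtype (Submodule.restrictScalars K I)

/-- `dim_K (I)_d`, the dimension of the degree `d` component of the (homogeneous) ideal `I`. -/
noncomputable def homDim {K R : Type*} [Field K] [CommRing R] [Algebra K R]
    (𝒜 : ℕ → Submodule K R) (I : Ideal R) (d : ℕ) : ℕ :=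
  Module.finrank K (homComp 𝒜 I d)

/-- `dim_K (R/I)_d`, the dimension of the degree `d` component of `R/I` for a
(homogeneous) ideal `I`, computed as `dim 𝒜 d / (I ∩ 𝒜 d)`. -/
noncomputable def quotDim {K R : Type*} [Field K] [CommRing R] [Algebra K R]
    (𝒜 : ℕ → Submodule K R) (I : Ideal R) (d : ℕ) : ℕ :=
  Module.finrank K ((𝒜 d) ⧸ homComp 𝒜 I d)

/-- `macaulayDown c d = c_⟨d⟩`: if `c = C(k_d,d) + … + C(k_1,1)` is the `d`-th Macaulay
representation of `c`, then `c_⟨d⟩ = C(k_d - 1,d) + … + C(k_1 - 1,1)`; computed greedily. -/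
def macaulayDown : ℕ → ℕ → ℕ
  | _, 0 => 0
  | c, d + 1 =>
      let k := Nat.findGreatest (fun k => Nat.choose k (d + 1) ≤ c) (c + d + 1)
      Nat.choose (k - 1) (d + 1) + macaulayDown (c - Nat.choose k (d + 1)) d

/-- Property (Gr,d) for the linear forms `l 0, …, l (r-1)` (letters: `true = c`,
`false = s`): for every word `o` of length `i ≤ r`,
(1) if `m ⊄ I_o` and `i < r` then `l_{i+1} ∉ I_o`;
(2) if `i = r` and `|o|_c < d` then `m ⊆ I_o`;
(3) if `i ≤ r - 2` then `dim (I_{o,c,s})_{d - |o|_c - 1} ≤ dim (I_{o,s,c})_{d - |o|_c - 1}`. -/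
def GrProp {K R : Type*} [Field K] [CommRing R] [Algebra K R]
    (𝒜 : ℕ → Submodule K R) [GradedAlgebra 𝒜] (l : ℕ → R) (r d : ℕ) : Prop :=
  ∀ o : List Bool, o.length ≤ r →
    (¬ (HomogeneousIdeal.irrelevant 𝒜).toIdeal ≤ wordIdeal l o → o.length < r →
        l o.length ∉ wordIdeal l o) ∧
    (o.length = r → o.count true < d →
        (HomogeneousIdeal.irrelevant 𝒜).toIdeal ≤ wordIdeal l o) ∧
    (o.length + 2 ≤ r →
        homDim 𝒜 (wordIdeal l (o ++ [true, false])) (d - o.count true - 1) ≤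
          homDim 𝒜 (wordIdeal l (o ++ [false, true])) (d - o.count true - 1))



/-! ### Numerics -/

theorem md_zero (d : ℕ) : macaulayDown 0 d = 0 := by
  induction d with
  | zero => rfl
  | succ d ih =>
    rw [macaulayDown]
    simp only [Nat.zero_sub, ih, Nat.add_zero]
    have h := Nat.findGreatest_spec (P := fun k => Nat.choose k (d + 1) ≤ 0) (m := 0)
      (n := 0 + d + 1) (by omega) (by simp)
    simp only [Nat.le_zero, Nat.choose_eq_zero_iff] at h ⊢
    omega

theorem lt_of_lt_choose {c k d : ℕ} (h : c < Nat.choose k d) : d ≤ k := by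
  by_contra hh
  rw [Nat.choose_eq_zero_of_lt (by omega)] at h
  omega

theorem choose_bound (c d : ℕ) : c < Nat.choose (c + d + 1) (d + 1) := by
  induction d with
  | zero => simp
  | succ d ih =>
    have := Nat.choose_le_choose (d+1) (show c + d + 1 ≤ c + (d+1) by omega)
    rw [Nat.choose_succ_succ']
    omega

theorem greedy_eq {c k d : ℕ} (h1 : Nat.choose k (d + 1) ≤ c)
    (h2 : c < Nat.choose (k + 1) (d + 1)) :
    Nat.findGreatest (fun k => Nat.choose k (d + 1) ≤ c) (c + d + 1) = k := by
  rw [Nat.findGreatest_eq_iff]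
  refine ⟨?_, fun _ => h1, ?_⟩
  · by_contra hh
    have := Nat.choose_le_choose (d + 1) (show c + d + 1 ≤ k by omega)
    have := choose_bound c d
    omega
  · intro n hn _ hc
    have := Nat.choose_le_choose (d + 1) (show k + 1 ≤ n by omega)
    omega

theorem md_succ {c k d : ℕ} (h1 : Nat.choose k (d + 1) ≤ c)
    (h2 : c < Nat.choose (k + 1) (d + 1)) :
    macaulayDown c (d + 1) =
      Nat.choose (k - 1) (d + 1) + macaulayDown (c - Nat.choose k (d + 1)) d := by
  rw [macaulayDown]
  simp only [greedy_eq h1 h2]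

theorem md_rep {k d c : ℕ} (h : c < Nat.choose k d) :
    macaulayDown (Nat.choose k (d + 1) + c) (d + 1) =
      Nat.choose (k - 1) (d + 1) + macaulayDown c d := by
  rw [md_succ (k := k) (by omega) (by rw [Nat.choose_succ_succ']; omega)]
  simp

/-- Every positive number has a greedy leading term. -/
theorem exists_rep (c d : ℕ) (hc : 0 < c) :
    ∃ k c', d + 1 ≤ k ∧ c' < Nat.choose k d ∧ c = Nat.choose k (d + 1) + c' := by
  set P := fun k => Nat.choose k (d + 1) ≤ c with hP
  set k := Nat.findGreatest P (c + d + 1) with hk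
  have hd1 : P (d + 1) := by simp [P]; omega
  have hle : d + 1 ≤ k := Nat.le_findGreatest (by omega) hd1
  have hs : P k := Nat.findGreatest_spec (P := P) (m := d + 1) (by omega) hd1
  have hlt : c < Nat.choose (k + 1) (d + 1) := by
    by_contra hh
    by_cases hb : k + 1 ≤ c + d + 1
    · exact Nat.findGreatest_is_greatest (P := P) (n := c + d + 1) (k := k + 1) (by omega) hb
        (by simp only [P]; omega)
    · have := Nat.choose_le_choose (d + 1) (show c + d + 1 ≤ k + 1 by omega)
      have := choose_bound c d
      omega
  refine ⟨k, c - Nat.choose k (d + 1), hle, ?_, ?_⟩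
  · rw [Nat.choose_succ_succ'] at hlt; simp only [P] at hs; omega
  · simp only [P] at hs; omega

/-- The left adjoint of `macaulayDown`. -/
def mUp : ℕ → ℕ → ℕ
  | h, 0 => h
  | h, d + 1 =>
      let k := Nat.findGreatest (fun k => Nat.choose k (d + 1) ≤ h) (h + d + 1)
      if h = 0 then 0 else Nat.choose (k + 1) (d + 1) + mUp (h - Nat.choose k (d + 1)) d

theorem mUp_zero (d : ℕ) : mUp 0 d = 0 := by
  cases d <;> simp [mUp]

theorem mUp_rep {k d c : ℕ} (hk : d + 1 ≤ k) (h : c < Nat.choose k d) :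
    mUp (Nat.choose k (d + 1) + c) (d + 1) = Nat.choose (k + 1) (d + 1) + mUp c d := by
  have hp : 0 < Nat.choose k (d + 1) := Nat.choose_pos hk
  rw [mUp]
  rw [greedy_eq (k := k) (by omega) (by rw [Nat.choose_succ_succ']; omega), if_neg (by omega)]
  simp

theorem mUp_choose {k d : ℕ} (hk : d ≤ k) : mUp (Nat.choose k d) d = Nat.choose (k + 1) d := by
  cases d with
  | zero => simp [mUp]
  | succ d =>
    have := mUp_rep (k := k) (d := d) (c := 0) hk (Nat.choose_pos (by omega))
    rw [mUp_zero] at this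
    simpa using this

theorem md_choose {k d : ℕ} (hk : d + 1 ≤ k) :
    macaulayDown (Nat.choose k (d + 1)) (d + 1) = Nat.choose (k - 1) (d + 1) := by
  have := md_rep (k := k) (d := d) (c := 0) (Nat.choose_pos (by omega))
  rw [md_zero] at this
  simpa using this

theorem mUp_rep' {k d c : ℕ} (hk : d + 1 ≤ k) (h : c ≤ Nat.choose k d) :
    mUp (Nat.choose k (d + 1) + c) (d + 1) = Nat.choose (k + 1) (d + 1) + mUp c d := by
  rcases h.lt_or_eq with h | h
  · exact mUp_rep hk h
  · subst h
    rw [mUp_choose (by omega), add_comm, ← Nat.choose_succ_succ', mUp_choose (by omega),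
      Nat.choose_succ_succ']

    omega

theorem galois (d : ℕ) : ∀ h c : ℕ, (0 < d ∨ h = 0) →
    (mUp h d ≤ c ↔ h ≤ macaulayDown c d) := by
  induction d with
  | zero =>
    intro h c hh
    obtain rfl : h = 0 := by omega
    simp [mUp]
  | succ d ih =>
    intro h c _
    rcases Nat.eq_zero_or_pos h with rfl | hpos
    · simp [mUp_zero]
    obtain ⟨k, h', hk, hh', rfl⟩ := exists_rep h d hpos
    rw [mUp_rep hk hh']
    have hd0 : 0 < d ∨ h' = 0 := by
      rcases Nat.eq_zero_or_pos d with rfl | hd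
      · right; simpa using hh'
      · left; exact hd
    have hkpos : 0 < Nat.choose k (d+1) := Nat.choose_pos hk
    have hkpos1 : 0 < Nat.choose (k+1) (d+1) := Nat.choose_pos (by omega)
    rcases Nat.eq_zero_or_pos c with rfl | hc
    · rw [md_zero]; omega
    obtain ⟨p, c', hp, hc', rfl⟩ := exists_rep c d hc
    rw [md_rep hc']
    rcases lt_trichotomy p (k + 1) with hpk | rfl | hpk
    · have a1 : Nat.choose p (d+1) + c' < Nat.choose (k+1) (d+1) := by
        have := Nat.choose_le_choose (d + 1) (show p + 1 ≤ k + 1 by omega)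
        rw [Nat.choose_succ_succ' p] at this
        omega
      have a2 : macaulayDown c' d < Nat.choose (p-1) d := by
        by_contra hcon
        rcases Nat.eq_zero_or_pos d with rfl | hd
        · simp [macaulayDown] at hcon
        · have := (ih (Nat.choose (p-1) d) c' (Or.inl hd)).2 (by omega)
          rw [mUp_choose (by omega), show p - 1 + 1 = p by omega] at this
          omega
      have a3 := Nat.choose_le_choose (d + 1) (show p ≤ k by omega)
      obtain ⟨q, rfl⟩ : ∃ q, p = q + 1 := ⟨p - 1, by omega⟩
      rw [Nat.choose_succ_succ' q] at a3
      simp only [Nat.add_sub_cancel] at *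
      omega
    · have := ih h' c' hd0
      simp only [Nat.add_sub_cancel]
      omega
    · have b1 : mUp h' d ≤ Nat.choose (k + 1) d := by
        rw [ih _ _ hd0]
        rcases hd0 with hd | rfl
        · obtain ⟨e, rfl⟩ : ∃ e, d = e + 1 := ⟨d - 1, by omega⟩
          rw [md_choose (by omega)]
          simp only [Nat.add_sub_cancel]; omega
        · omega
      have b2 := Nat.choose_le_choose (d + 1) (show k + 2 ≤ p by omega)
      have b3 := Nat.choose_le_choose (d + 1) (show k + 1 ≤ p - 1 by omega)
      rw [Nat.choose_succ_succ' (k+1)] at b2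
      rw [Nat.choose_succ_succ' k] at b3

      omega

theorem md_le (d : ℕ) : ∀ h, macaulayDown h d ≤ h := by
  induction d with
  | zero => intro h; simp [macaulayDown]
  | succ d ih =>
    intro h
    rcases Nat.eq_zero_or_pos h with rfl | hpos
    · simp [md_zero]
    obtain ⟨k, h', hk, hh', rfl⟩ := exists_rep h d hpos
    rw [md_rep hh']
    have := ih h'
    have := Nat.choose_le_choose (d + 1) (show k - 1 ≤ k by omega)
    omega

theorem diff_rep {k d h' : ℕ} (hk : d + 1 ≤ k) (hh' : h' < Nat.choose k d) :
    (Nat.choose k (d+1) + h') - macaulayDown (Nat.choose k (d+1) + h') (d+1)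
      = Nat.choose (k - 1) d + (h' - macaulayDown h' d) := by
  rw [md_rep hh']
  obtain ⟨q, rfl⟩ : ∃ q, k = q + 1 := ⟨k - 1, by omega⟩
  have := md_le d h'
  rw [Nat.choose_succ_succ' q]
  simp only [Nat.add_sub_cancel]
  omega

theorem diff_bound (d : ℕ) : ∀ h k, h < Nat.choose (k + 1) (d + 1) →
    h - macaulayDown h (d + 1) ≤ Nat.choose k d := by
  induction d with
  | zero =>
    intro h k _
    rcases Nat.eq_zero_or_pos h with rfl | hpos
    · simp
    obtain ⟨p, h', hp, hh', rfl⟩ := exists_rep h 0 hpos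
    rw [diff_rep hp hh']
    simp at hh' ⊢
    omega
  | succ d ih =>
    intro h k hk
    rcases Nat.eq_zero_or_pos h with rfl | hpos
    · simp
    obtain ⟨p, h', hp, hh', rfl⟩ := exists_rep h (d + 1) hpos
    rw [diff_rep hp hh']
    obtain ⟨q, rfl⟩ : ∃ q, p = q + 1 := ⟨p - 1, by omega⟩
    have h1 := ih h' q hh'
    have h2 : q + 1 ≤ k := by
      by_contra hcon
      have := Nat.choose_le_choose (d + 1 + 1) (show k + 1 ≤ q + 1 by omega)
      omega
    have h3 := Nat.choose_le_choose (d + 1) h2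
    rw [Nat.choose_succ_succ' q] at h3
    simp only [Nat.add_sub_cancel] at *
    omega

theorem mUp_le (d : ℕ) : ∀ h, mUp h (d + 1) ≤ h + mUp (h - macaulayDown h (d + 1)) d := by
  induction d with
  | zero =>
    intro h
    rcases Nat.eq_zero_or_pos h with rfl | hpos
    · simp [mUp_zero]
    obtain ⟨k, h', hk, hh', rfl⟩ := exists_rep h 0 hpos
    rw [diff_rep hk hh', mUp_rep hk hh']
    simp [mUp] at *
    omega
  | succ d ih =>
    intro h
    rcases Nat.eq_zero_or_pos h with rfl | hpos
    · simp [mUp_zero]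
    obtain ⟨k, h', hk, hh', rfl⟩ := exists_rep h (d + 1) hpos
    rw [diff_rep hk hh', mUp_rep hk hh']
    obtain ⟨q, rfl⟩ : ∃ q, k = q + 1 := ⟨k - 1, by omega⟩
    have h1 := ih h'
    have h2 := diff_bound d h' q hh'
    simp only [Nat.add_sub_cancel] at *
    rw [mUp_rep' (by omega) h2, Nat.choose_succ_succ' (q + 1) (d + 1)]

    omega

theorem green_numeric {d h c : ℕ} (hc : h ≤ c)
    (H : h ≤ macaulayDown h (d + 2) + macaulayDown (c - h) (d + 1)) :
    h ≤ macaulayDown c (d + 2) := by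
  rw [← galois _ _ _ (Or.inl (by omega))]
  have h1 := mUp_le (d + 1) h
  have h2 : mUp (h - macaulayDown h (d + 2)) (d + 1) ≤ c - h := by
    rw [galois _ _ _ (Or.inl (by omega))]; omega
  simp only [show d + 1 + 1 = d + 2 from rfl] at h1
  omega

/-! ### Zariski open sets -/

section Zar
variable {K V : Type*} [Field K] [AddCommGroup V] [Module K V]

theorem isZOpen_of_local {U : Set V}
    (h : ∀ u ∈ U, ∃ p ∈ polyFuns K V, p u ≠ 0 ∧ ∀ v, p v ≠ 0 → v ∈ U) : IsZOpen K U := by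
  refine ⟨{p | p ∈ polyFuns K V ∧ ∀ v, p v ≠ 0 → v ∈ U}, fun f hf => hf.1, ?_⟩
  ext v
  simp only [Set.mem_compl_iff, Set.mem_ofPred_eq]
  constructor
  · intro hv f hf
    by_contra hcon
    exact hv (hf.2 v hcon)
  · intro hv hU
    obtain ⟨p, hp, hpv, hp2⟩ := h v hU
    exact hpv (hv p ⟨hp, hp2⟩)

theorem polyFuns_line {f : V → K} (hf : f ∈ polyFuns K V) (u w : V) :
    ∃ P : Polynomial K, ∀ t, f (u + t • w) = P.eval t := by
  induction hf using Algebra.adjoin_induction with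
  | mem x hx =>
    obtain ⟨φ, rfl⟩ := hx
    exact ⟨Polynomial.C (φ u) + Polynomial.X * Polynomial.C (φ w), fun t => by simp; ring⟩
  | algebraMap r => exact ⟨Polynomial.C r, fun t => by simp⟩
  | add x y _ _ hx hy =>
    obtain ⟨P, hP⟩ := hx
    obtain ⟨Q, hQ⟩ := hy
    exact ⟨P + Q, fun t => by simp [hP, hQ]⟩
  | mul x y _ _ hx hy =>
    obtain ⟨P, hP⟩ := hx
    obtain ⟨Q, hQ⟩ := hy
    exact ⟨P * Q, fun t => by simp [hP, hQ]⟩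

theorem polyFuns_mul_ne [Infinite K] {f g : V → K} (hf : f ∈ polyFuns K V)
    (hg : g ∈ polyFuns K V) {u v : V} (hu : f u ≠ 0) (hv : g v ≠ 0) :
    ∃ w, (f * g) w ≠ 0 := by
  obtain ⟨P, hP⟩ := polyFuns_line hf u (v - u)
  obtain ⟨Q, hQ⟩ := polyFuns_line hg u (v - u)
  have hP0 : P ≠ 0 := by
    rintro rfl
    have := hP 0
    simp at this
    exact hu this
  have hQ0 : Q ≠ 0 := by
    rintro rfl
    have := hQ 1
    simp at this
    exact hv this
  by_contra! hcon
  refine mul_ne_zero hP0 hQ0 (Polynomial.funext fun t => ?_)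
  have := hcon (u + t • (v - u))
  simpa [hP, hQ] using this

/-- A property of vectors which holds on a nonempty basic open set. -/
def Gen (K : Type*) {V : Type*} [Field K] [AddCommGroup V] [Module K V] (U : Set V) : Prop :=
  ∃ p ∈ polyFuns K V, (∃ v, p v ≠ 0) ∧ ∀ v, p v ≠ 0 → v ∈ U

theorem Gen.inter [Infinite K] {U W : Set V} (hU : Gen K U) (hW : Gen K W) : Gen K (U ∩ W) := by
  obtain ⟨p, hp, ⟨u, hu⟩, hpU⟩ := hU
  obtain ⟨q, hq, ⟨v, hv⟩, hqW⟩ := hW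
  refine ⟨p * q, mul_mem hp hq, polyFuns_mul_ne hp hq hu hv, fun w hw => ?_⟩
  rw [Pi.mul_apply] at hw
  exact ⟨hpU w (left_ne_zero_of_mul hw), hqW w (right_ne_zero_of_mul hw)⟩

theorem Gen.nonempty {U : Set V} (hU : Gen K U) : U.Nonempty := by
  obtain ⟨p, hp, ⟨u, hu⟩, hpU⟩ := hU
  exact ⟨u, hpU u hu⟩

end Zar

section Alg
variable {K R : Type*} [Field K] [CommRing R] [Algebra K R]

/-- `l · A` for a subspace `A`. -/
def lmul (l : R) (A : Submodule K R) : Submodule K R := A.map (LinearMap.mulLeft K l)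

instance (l : R) (A : Submodule K R) [FiniteDimensional K A] : FiniteDimensional K (lmul l A) := by
  unfold lmul; infer_instance

theorem mem_lmul {l : R} {A : Submodule K R} {x : R} : x ∈ lmul l A ↔ ∃ a ∈ A, l * a = x := by
  simp [lmul]

theorem rank_local (V J A : Submodule K R) [FiniteDimensional K J] [FiniteDimensional K A]
    (k : ℕ) (l₀ : V) (h : k ≤ Module.finrank K ↥(J ⊔ lmul (l₀ : R) A)) :
    ∃ p ∈ polyFuns K V, p l₀ ≠ 0 ∧
      ∀ l : V, p l ≠ 0 → k ≤ Module.finrank K ↥(J ⊔ lmul (l : R) A) := by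
  obtain ⟨w, hw⟩ := exists_linearIndependent_of_le_finrank h
  have hw' : ∀ i, ∃ j ∈ J, ∃ a ∈ A, j + (l₀ : R) * a = w i := by
    intro i
    obtain ⟨j, hj, b, hb, hjb⟩ := Submodule.mem_sup.1 (w i).2
    obtain ⟨a, ha, rfl⟩ := mem_lmul.1 hb
    exact ⟨j, hj, a, ha, hjb⟩
  choose j hj a ha hja using hw'
  have hw2 : LinearIndependent K (fun i => (w i : R)) :=
    hw.map' (Submodule.subtype _) (Submodule.ker_subtype _)
  obtain ⟨ψ, hψ⟩ := LinearMap.exists_leftInverse_of_injective _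
    (LinearMap.ker_eq_bot.2 (hw2.fintypeLinearCombination_injective))
  have hψ' : ∀ i, ψ (w i) = Pi.single i 1 := by
    intro i
    have := LinearMap.congr_fun hψ (Pi.single i 1)
    simpa [Fintype.linearCombination_apply_single] using this
  let M : V → Matrix (Fin k) (Fin k) K := fun l => Matrix.of fun i => ψ (j i + (l : R) * a i)
  refine ⟨fun l => (M l).det, ?_, ?_, ?_⟩
  · have hent : ∀ i s, (fun l => M l i s) ∈ polyFuns K V := by
      intro i s
      have : (fun l => M l i s) = algebraMap K (V → K) (ψ (j i) s) +
          ⇑((LinearMap.proj s ∘ₗ ψ ∘ₗ LinearMap.mulRight K (a i) ∘ₗ V.subtype : V →ₗ[K] K)) := by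
        ext l
        simp [M]
      rw [this]
      exact add_mem (Subalgebra.algebraMap_mem _ _) (Algebra.subset_adjoin ⟨_, rfl⟩)
    have : (fun l => (M l).det) = ∑ σ : Equiv.Perm (Fin k),
        (Equiv.Perm.sign σ : ℤ) • ∏ i, (fun l => M l (σ i) i) := by
      ext l
      simp [Matrix.det_apply, Finset.prod_apply, Units.smul_def]
    rw [this]
    exact sum_mem fun σ _ => zsmul_mem (prod_mem fun i _ => hent _ _) _
  · have : M l₀ = 1 := by
      ext i s
      simp only [M, Matrix.of_apply, hja, hψ', Matrix.one_apply, Pi.single_apply]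
      simp only [eq_comm]
    simp [this]
  · intro l hl
    have h1 : LinearIndependent K (M l).row := Matrix.linearIndependent_rows_of_det_ne_zero hl
    have h2 : LinearIndependent K (fun i => j i + (l : R) * a i) := by
      apply LinearIndependent.of_comp ψ
      exact h1
    have h3 : LinearIndependent K (fun i =>
        (⟨j i + (l : R) * a i, Submodule.add_mem_sup (hj i) (mem_lmul.2 ⟨_, ha i, rfl⟩)⟩ :
          ↥(J ⊔ lmul (l : R) A))) := by
      apply LinearIndependent.of_comp (Submodule.subtype _)
      exact h2
    simpa using h3.fintype_card_le_finrank

theorem finrank_map_add {M N : Type*} [AddCommGroup M] [Module K M] [AddCommGroup N] [Module K N]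
    (f : M →ₗ[K] N) (B : Submodule K M) [FiniteDimensional K B] :
    Module.finrank K (B.map f) + Module.finrank K ↥(B ⊓ LinearMap.ker f) = Module.finrank K B := by
  have h := LinearMap.finrank_range_add_finrank_ker (f.domRestrict B)
  rw [LinearMap.range_domRestrict] at h
  have h2 : Module.finrank K (LinearMap.ker (f.domRestrict B)) =
      Module.finrank K ↥(B ⊓ LinearMap.ker f) := by
    rw [← Submodule.map_comap_subtype, LinearMap.ker_domRestrict]
    exact (Submodule.finrank_map_subtype_eq _ _).symm
  omega

theorem finrank_sup_lmul (l : R) (J B C : Submodule K R) [FiniteDimensional K J]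
    [FiniteDimensional K B] (hC : C ≤ B) (hC2 : ∀ x ∈ B, x ∈ C ↔ l * x ∈ J) :
    Module.finrank K ↥(J ⊔ lmul l B) + Module.finrank K C =
      Module.finrank K J + Module.finrank K B := by
  have h1 := finrank_map_add J.mkQ (J ⊔ lmul l B)
  have h2 := finrank_map_add (J.mkQ ∘ₗ LinearMap.mulLeft K l) B
  have e1 : (J ⊔ lmul l B) ⊓ LinearMap.ker J.mkQ = J := by
    rw [Submodule.ker_mkQ]; exact inf_eq_right.2 le_sup_left
  have e2 : B ⊓ LinearMap.ker (J.mkQ ∘ₗ LinearMap.mulLeft K l) = C := by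
    ext x
    simp only [Submodule.mem_inf, LinearMap.mem_ker, LinearMap.comp_apply, Submodule.mkQ_apply,
      Submodule.Quotient.mk_eq_zero, LinearMap.mulLeft_apply]
    constructor
    · rintro ⟨a, b⟩; exact (hC2 x a).2 b
    · intro hx; exact ⟨hC hx, (hC2 x (hC hx)).1 hx⟩
  have e3 : (J ⊔ lmul l B).map J.mkQ = B.map (J.mkQ ∘ₗ LinearMap.mulLeft K l) := by
    rw [Submodule.map_sup, Submodule.map_comp, lmul]
    simp
  rw [e1, e3] at h1
  rw [e2] at h2
  omega

variable (𝒜 : ℕ → Submodule K R)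

theorem lmul_le (hstd : ∀ n, 𝒜 (n + 1) = 𝒜 1 * 𝒜 n) (n : ℕ) (l : 𝒜 1) :
    lmul (l : R) (𝒜 n) ≤ 𝒜 (n + 1) := by
  intro x hx
  obtain ⟨a, ha, rfl⟩ := mem_lmul.1 hx
  rw [hstd]
  exact Submodule.mul_mem_mul l.2 ha

theorem gen_of_exists (J A : Submodule K R) [FiniteDimensional K J] [FiniteDimensional K A]
    (a m : ℕ) (l₀ : 𝒜 1) (h : a - Module.finrank K ↥(J ⊔ lmul (l₀ : R) A) ≤ m) :
    Gen K {l : 𝒜 1 | a - Module.finrank K ↥(J ⊔ lmul (l : R) A) ≤ m} := by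
  obtain ⟨p, hp, hp0, hp1⟩ := rank_local (𝒜 1) J A (a - m) l₀ (by omega)
  refine ⟨p, hp, ⟨l₀, hp0⟩, fun l hl => ?_⟩
  have := hp1 l hl
  simp only [Set.mem_ofPred_eq]
  omega

theorem exists_lt (hstd : ∀ n, 𝒜 (n + 1) = 𝒜 1 * 𝒜 n) [∀ n, FiniteDimensional K (𝒜 n)]
    (d : ℕ) (J : Submodule K R) (hJ : J ≤ 𝒜 (d + 1))
    (hlt : Module.finrank K J < Module.finrank K (𝒜 (d + 1))) :
    ∃ l : 𝒜 1, Module.finrank K J < Module.finrank K ↥(J ⊔ lmul (l : R) (𝒜 d)) := by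
  have : FiniteDimensional K J := Submodule.finiteDimensional_of_le hJ
  by_contra! hcon
  have : 𝒜 (d + 1) ≤ J := by
    rw [hstd, Submodule.mul_le]
    intro x hx y hy
    have h1 := Submodule.eq_of_le_of_finrank_le
      (show J ≤ J ⊔ lmul x (𝒜 d) from le_sup_left) (hcon ⟨x, hx⟩)
    rw [h1]
    exact Submodule.mem_sup_right (mem_lmul.2 ⟨y, hy, rfl⟩)
  have := Submodule.finrank_mono this
  omega

theorem green_exists [Infinite K] (hstd : ∀ n, 𝒜 (n + 1) = 𝒜 1 * 𝒜 n) [∀ n, FiniteDimensional K (𝒜 n)]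
    (d : ℕ) : ∀ (c : ℕ) (J : Submodule K R), J ≤ 𝒜 (d + 1) →
      Module.finrank K (𝒜 (d + 1)) - Module.finrank K J = c →
      ∃ l : 𝒜 1, Module.finrank K (𝒜 (d + 1)) - Module.finrank K ↥(J ⊔ lmul (l : R) (𝒜 d))
        ≤ macaulayDown c (d + 1) := by
  induction d with
  | zero =>
    intro c J hJ hc
    have : FiniteDimensional K J := Submodule.finiteDimensional_of_le hJ
    rcases Nat.eq_zero_or_pos c with rfl | hpos
    · refine ⟨0, ?_⟩
      have := Submodule.finrank_mono (show J ≤ J ⊔ lmul ((0 : 𝒜 1) : R) (𝒜 0) from le_sup_left)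
      omega
    · obtain ⟨l, hl⟩ := exists_lt 𝒜 hstd 0 J hJ (by omega)
      refine ⟨l, ?_⟩
      have := md_choose (k := c) (d := 0) (by omega)
      simp at this ⊢
      rw [this]
      simp at hc hl
      omega
  | succ d ihd =>
    intro c
    induction c using Nat.strong_induction_on with
    | _ c ihc =>
    intro J hJ hc
    have : FiniteDimensional K J := Submodule.finiteDimensional_of_le hJ
    rcases Nat.eq_zero_or_pos c with rfl | hpos
    · refine ⟨0, ?_⟩
      have := Submodule.finrank_mono
        (show J ≤ J ⊔ lmul ((0 : 𝒜 1) : R) (𝒜 (d + 1)) from le_sup_left)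
      omega
    have hX : ∀ l : 𝒜 1, J ⊔ lmul (l : R) (𝒜 (d + 1)) ≤ 𝒜 (d + 1 + 1) := fun l =>
      sup_le hJ (lmul_le 𝒜 hstd _ l)
    set a := Module.finrank K (𝒜 (d + 1 + 1)) with ha
    have hXr : ∀ l : 𝒜 1, Module.finrank K ↥(J ⊔ lmul (l : R) (𝒜 (d + 1))) ≤ a := fun l =>
      Submodule.finrank_mono (hX l)
    -- a form of minimal colength
    obtain ⟨l, hl⟩ : ∃ l : 𝒜 1, ∀ l' : 𝒜 1,
        a - Module.finrank K ↥(J ⊔ lmul (l : R) (𝒜 (d + 1))) ≤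
          a - Module.finrank K ↥(J ⊔ lmul (l' : R) (𝒜 (d + 1))) := by
      exact ⟨_, fun l' => Function.argmin_le
        (fun l : 𝒜 1 => a - Module.finrank K ↥(J ⊔ lmul (l : R) (𝒜 (d + 1)))) l'⟩
    refine ⟨l, ?_⟩
    set X := J ⊔ lmul (l : R) (𝒜 (d + 1)) with hXdef
    set r := Module.finrank K X with hr
    have hra : r ≤ a := hXr l
    have hjr : Module.finrank K J < r := by
      obtain ⟨l₁, hl₁⟩ := exists_lt 𝒜 hstd (d + 1) J hJ (by omega)
      have h1 := hl l₁
      have h2 := hXr l₁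
      omega
    -- first generic condition
    obtain ⟨l₁, hl₁⟩ := ihc (a - r) (by omega) X (hX l) rfl
    have G1 := gen_of_exists 𝒜 X (𝒜 (d + 1)) _ _ l₁ hl₁
    -- second generic condition
    let C : Submodule K R := 𝒜 (d + 1) ⊓ J.comap (LinearMap.mulLeft K (l : R))
    have hC : C ≤ 𝒜 (d + 1) := inf_le_left
    have : FiniteDimensional K C := Submodule.finiteDimensional_of_le hC
    have hCmem : ∀ x ∈ 𝒜 (d + 1), x ∈ C ↔ (l : R) * x ∈ J := by
      intro x hx
      simp [C, hx]
    have e1 := finrank_sup_lmul (l : R) J (𝒜 (d + 1)) C hC hCmem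
    rw [← hXdef, ← hr] at e1
    have hCr := Submodule.finrank_mono hC
    obtain ⟨l₂, hl₂⟩ := ihd (c - (a - r)) C hC (by omega)
    have G2 := gen_of_exists 𝒜 C (𝒜 d) _ _ l₂ hl₂
    -- third generic condition
    have G3 := gen_of_exists 𝒜 J (𝒜 (d + 1)) a (a - r) l le_rfl
    obtain ⟨l', ⟨⟨h1, h2⟩, h3⟩⟩ := ((G1.inter G2).inter G3).nonempty
    simp only [Set.mem_ofPred_eq] at h1 h2 h3
    set Y := J ⊔ lmul (l' : R) (𝒜 (d + 1)) with hY
    have hYr : Module.finrank K Y = r := by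
      have h4 := hl l'
      have h5 := hXr l'
      rw [← hY] at h4 h5
      omega
    set B := C ⊔ lmul (l' : R) (𝒜 d) with hB
    have hBA : B ≤ 𝒜 (d + 1) := sup_le hC (lmul_le 𝒜 hstd _ l')
    have hBr := Submodule.finrank_mono hBA
    have e2 := finrank_sup_lmul (l : R) J B C le_sup_left (fun x hx => hCmem x (hBA hx))
    have hZ : J ⊔ lmul (l : R) B ≤ X ⊓ Y := by
      apply sup_le (le_inf le_sup_left le_sup_left)
      intro x hx
      obtain ⟨b, hb, rfl⟩ := mem_lmul.1 hx
      refine ⟨Submodule.mem_sup_right (mem_lmul.2 ⟨b, hBA hb, rfl⟩), ?_⟩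
      obtain ⟨u, hu, v, hv, rfl⟩ := Submodule.mem_sup.1 hb
      obtain ⟨w, hw, rfl⟩ := mem_lmul.1 hv
      rw [mul_add]
      apply Submodule.add_mem_sup ((hCmem u (hC hu)).1 hu)
      exact mem_lmul.2 ⟨l * w, lmul_le 𝒜 hstd d l (mem_lmul.2 ⟨w, hw, rfl⟩), by ring⟩
    have e3 := Submodule.finrank_mono hZ
    have e4 := Submodule.finrank_sup_add_finrank_inf_eq X Y
    have e5 : X ⊔ lmul (l' : R) (𝒜 (d + 1)) = X ⊔ Y := by
      rw [hXdef, hY]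
      rw [sup_sup_sup_comm, sup_idem, sup_assoc]
    rw [e5] at h1
    have e6 : Module.finrank K ↥(X ⊔ Y) ≤ a := Submodule.finrank_mono (sup_le (hX l) (hX l'))
    apply green_numeric (by omega)
    simp only [show d + 1 + 1 = d + 2 from rfl] at *
    omega

end Alg

/-- **Green's general hyperplane restriction theorem.**
`R` a standard graded algebra over an infinite field `K` (grading `𝒜`, `𝒜 0 = K·1`,
generated in degree one with `R_1` finite dimensional), `d > 0`.  There is a nonempty
Zariski open set `U ⊆ 𝔸(R_1)` such that every linear form `l ∈ U` satisfies
`dim_K (R/lR)_d ≤ (dim_K R_d)_⟨d⟩`. -/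
theorem green_general_hyperplane_restriction
    {K R : Type*} [Field K] [Infinite K] [CommRing R] [Algebra K R]
    (𝒜 : ℕ → Submodule K R) [GradedAlgebra 𝒜]
    (h0 : 𝒜 0 = (1 : Submodule K R)) (hstd : ∀ n, 𝒜 (n + 1) = 𝒜 1 * 𝒜 n)
    [FiniteDimensional K (𝒜 1)] (d : ℕ) (hd : 0 < d) :
    ∃ U : Set (𝒜 1), IsZOpen K U ∧ U.Nonempty ∧
      ∀ l ∈ U, quotDim 𝒜 (Ideal.span {(l : R)}) d ≤
        macaulayDown (Module.finrank K (𝒜 d)) d := by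
  have hfd : ∀ n, FiniteDimensional K (𝒜 n) := by
    intro n
    rw [← Submodule.fg_iff_finiteDimensional]
    induction n with
    | zero => rw [h0, Submodule.one_eq_span]; exact Submodule.fg_span_singleton _
    | succ n ih =>
      rw [hstd]
      exact Submodule.FG.mul ((Submodule.fg_iff_finiteDimensional _).2 inferInstance) ih
  obtain ⟨e, rfl⟩ : ∃ e, d = e + 1 := ⟨d - 1, by omega⟩
  obtain ⟨l₀, hl₀⟩ := green_exists 𝒜 hstd e _ ⊥ bot_le rfl
  rw [finrank_bot, Nat.sub_zero] at hl₀
  set m := macaulayDown (Module.finrank K (𝒜 (e + 1))) (e + 1) with hm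
  refine ⟨{l : 𝒜 1 | Module.finrank K (𝒜 (e + 1)) -
    Module.finrank K ↥((⊥ : Submodule K R) ⊔ lmul (l : R) (𝒜 e)) ≤ m}, ?_, ⟨l₀, hl₀⟩, ?_⟩
  · apply isZOpen_of_local
    intro u hu
    simp only [Set.mem_ofPred_eq] at hu
    obtain ⟨p, hp, hp0, hp1⟩ := rank_local (𝒜 1) ⊥ (𝒜 e)
      (Module.finrank K (𝒜 (e + 1)) - m) u (by omega)
    refine ⟨p, hp, hp0, fun v hv => ?_⟩
    have := hp1 v hv
    simp only [Set.mem_ofPred_eq]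
    omega
  · intro l hl
    simp only [Set.mem_ofPred_eq] at hl
    rw [bot_sup_eq] at hl
    refine le_trans ?_ hl
    unfold quotDim
    have h1 := Submodule.finrank_quotient_add_finrank (homComp 𝒜 (Ideal.span {(l : R)}) (e + 1))
    have h2 : Module.finrank K (lmul (l : R) (𝒜 e)) ≤
        Module.finrank K (homComp 𝒜 (Ideal.span {(l : R)}) (e + 1)) := by
      rw [← Submodule.finrank_map_subtype_eq (𝒜 (e + 1))]
      apply Submodule.finrank_mono
      intro x hx
      refine ⟨⟨x, lmul_le 𝒜 hstd e l hx⟩, ?_, rfl⟩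
      obtain ⟨a, _, rfl⟩ := mem_lmul.1 hx
      exact Ideal.mul_mem_right _ _ (Ideal.mem_span_singleton_self _)
    omega
end

section
/- Let R be a standard graded algebra over a field K with n = dim_K R_1, let d > 0 be a degree, and let l_1,…,l_r be linear forms of R with r ≥ n + d − 1. If l_1,…,l_r satisfy condition (1) of property (Gr,d) (for every word o = o_1,…,o_i with i < r, if m ⊄ I_o then l_{i+1} ∉ I_o), then l_1,…,l_r generate the homogeneous maximal ideal m and satisfy condition (2) of (Gr,d): for every word o of length r with |o|_c < d one has m ⊆ I_o. -/
theorem wordIdealAux_snoc {R : Type*} [CommRing R] (l : ℕ → R) (a : Bool) (o : List Bool) :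
    ∀ (j : ℕ) (I : Ideal R), wordIdealAux l j I (o ++ [a]) =
      (if a then (wordIdealAux l j I o).colon (Ideal.span {l (j + o.length)})
        else (wordIdealAux l j I o) ⊔ Ideal.span {l (j + o.length)}) := by
  induction o with
  | nil => intro j I; simp [wordIdealAux]
  | cons b o ih =>
    intro j I
    have e : j + (b :: o).length = j + 1 + o.length := by simp; omega
    rw [e, List.cons_append, wordIdealAux, ih, wordIdealAux]

theorem wordIdeal_snoc {R : Type*} [CommRing R] (l : ℕ → R) (a : Bool) (o : List Bool) :
    wordIdeal l (o ++ [a]) =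
      (if a then (wordIdeal l o).colon (Ideal.span {l o.length})
        else (wordIdeal l o) ⊔ Ideal.span {l o.length}) := by
  have := wordIdealAux_snoc l a o 0 ⊥
  simpa only [Nat.zero_add, wordIdeal] using this

theorem wordIdeal_le_snoc {R : Type*} [CommRing R] (l : ℕ → R) (a : Bool) (o : List Bool) :
    wordIdeal l o ≤ wordIdeal l (o ++ [a]) := by
  rw [wordIdeal_snoc]
  cases a
  · simp
  · intro x hx
    simp only [if_true]
    rw [Submodule.mem_colon]
    intro p _
    exact Ideal.mul_mem_right _ _ hx

theorem wordIdeal_replicate_le {R : Type*} [CommRing R] (l : ℕ → R) (r : ℕ) :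
    wordIdeal l (List.replicate r false) ≤ Ideal.span (l '' Set.Iio r) := by
  induction r with
  | zero => simp [wordIdeal, wordIdealAux]
  | succ r ih =>
    rw [List.replicate_succ', wordIdeal_snoc]
    simp only [List.length_replicate, Bool.false_eq_true, if_false]
    refine sup_le (ih.trans (Ideal.span_mono (Set.image_mono ?_))) (Ideal.span_mono ?_)
    · intro x hx; exact Nat.lt_succ_of_lt hx
    · rintro x rfl; exact ⟨r, Nat.lt_succ_self r, rfl⟩

theorem irrelevant_le_of_one_le {K R : Type*} [Field K] [CommRing R] [Algebra K R]
    (𝒜 : ℕ → Submodule K R) [GradedAlgebra 𝒜] (hstd : ∀ n, 𝒜 (n + 1) = 𝒜 1 * 𝒜 n)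
    (I : Ideal R) (h : ∀ x ∈ 𝒜 1, x ∈ I) :
    (HomogeneousIdeal.irrelevant 𝒜).toIdeal ≤ I := by
  classical
  intro x hx
  have hx0 : GradedRing.proj 𝒜 0 x = 0 := hx
  rw [← DirectSum.sum_support_decompose 𝒜 x]
  refine Ideal.sum_mem _ fun i _ => ?_
  rcases i with _ | i
  · rw [GradedRing.proj_apply] at hx0
    rw [hx0]; exact I.zero_mem
  · have hm : ((DirectSum.decompose 𝒜 x (i + 1) : 𝒜 (i + 1)) : R) ∈ 𝒜 1 * 𝒜 i := by
      rw [← hstd]; exact SetLike.coe_mem _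
    have hle : 𝒜 1 * 𝒜 i ≤ I.restrictScalars K :=
      Submodule.mul_le.2 fun a ha b _ => Ideal.mul_mem_right _ _ (h a ha)
    exact hle hm

theorem count_false_le {K R : Type*} [Field K] [CommRing R] [Algebra K R]
    (𝒜 : ℕ → Submodule K R) [GradedAlgebra 𝒜]
    [FiniteDimensional K (𝒜 1)] (r : ℕ)
    (l : ℕ → R) (hl : ∀ j < r, l j ∈ 𝒜 1)
    (h1 : ∀ o : List Bool, o.length < r →
      ¬ (HomogeneousIdeal.irrelevant 𝒜).toIdeal ≤ wordIdeal l o →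
      l o.length ∉ wordIdeal l o) (o : List Bool) :
    o.length ≤ r → ¬ (HomogeneousIdeal.irrelevant 𝒜).toIdeal ≤ wordIdeal l o →
      o.count false ≤ Module.finrank K (homComp 𝒜 (wordIdeal l o) 1) := by
  induction o using List.reverseRecOn with
  | nil => simp
  | append_singleton o a ih =>
    intro hlen hm
    have hlt : o.length < r := by simp at hlen; omega
    have hle := wordIdeal_le_snoc l a o
    have hm' : ¬ (HomogeneousIdeal.irrelevant 𝒜).toIdeal ≤ wordIdeal l o :=
      fun h => hm (h.trans hle)
    have ih := ih hlt.le hm'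
    have hcomp : homComp 𝒜 (wordIdeal l o) 1 ≤ homComp 𝒜 (wordIdeal l (o ++ [a])) 1 :=
      fun x hx => hle hx
    cases a
    · have hnot := h1 o hlt hm'
      have hlt' : homComp 𝒜 (wordIdeal l o) 1 < homComp 𝒜 (wordIdeal l (o ++ [false])) 1 := by
        refine lt_of_le_of_ne hcomp fun he => hnot ?_
        have hin : (⟨l o.length, hl _ hlt⟩ : 𝒜 1) ∈
            homComp 𝒜 (wordIdeal l (o ++ [false])) 1 := by
          change l o.length ∈ wordIdeal l (o ++ [false])
          rw [wordIdeal_snoc]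
          exact Ideal.mem_sup_right (Ideal.mem_span_singleton_self _)
        rw [← he] at hin
        exact hin
      have := Submodule.finrank_lt_finrank_of_lt hlt'
      simp only [List.count_append, List.count_singleton]
      simp
      omega
    · have := Submodule.finrank_mono hcomp
      simp only [List.count_append, List.count_singleton]
      simp
      omega

/-- If linear forms `l 0, …, l (r-1)` of a standard graded algebra `R`, with
`r ≥ n + d - 1` (`n = dim_K R_1`, `d > 0`), satisfy condition (1) of property (Gr,d),
then they generate the homogeneous maximal ideal and satisfy condition (2) of (Gr,d):
for every word `o` of length `r` with `|o|_c < d` one has `m ⊆ I_o`. -/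
theorem gr_condition_two_of_condition_one
    {K R : Type*} [Field K] [CommRing R] [Algebra K R]
    (𝒜 : ℕ → Submodule K R) [GradedAlgebra 𝒜]
    (h0 : 𝒜 0 = (1 : Submodule K R)) (hstd : ∀ n, 𝒜 (n + 1) = 𝒜 1 * 𝒜 n)
    [FiniteDimensional K (𝒜 1)] (d r : ℕ) (hd : 0 < d)
    (hr : Module.finrank K (𝒜 1) + d ≤ r + 1)
    (l : ℕ → R) (hl : ∀ j < r, l j ∈ 𝒜 1)
    (h1 : ∀ o : List Bool, o.length < r →
      ¬ (HomogeneousIdeal.irrelevant 𝒜).toIdeal ≤ wordIdeal l o →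
      l o.length ∉ wordIdeal l o) :
    Ideal.span (l '' Set.Iio r) = (HomogeneousIdeal.irrelevant 𝒜).toIdeal ∧
      ∀ o : List Bool, o.length = r → o.count true < d →
        (HomogeneousIdeal.irrelevant 𝒜).toIdeal ≤ wordIdeal l o := by
  have key : ∀ o : List Bool, o.length = r → o.count true < d →
      (HomogeneousIdeal.irrelevant 𝒜).toIdeal ≤ wordIdeal l o := by
    intro o ho hc
    by_contra hm
    have hle := count_false_le 𝒜 r l hl h1 o ho.le hm
    have hsum : o.count true + o.count false = o.length := List.count_true_add_count_false o
    have hle2 := Submodule.finrank_le (homComp 𝒜 (wordIdeal l o) 1)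
    have htop : homComp 𝒜 (wordIdeal l o) 1 = ⊤ :=
      Submodule.eq_top_of_finrank_eq (by omega)
    refine hm (irrelevant_le_of_one_le 𝒜 hstd _ fun x hx => ?_)
    have hin : (⟨x, hx⟩ : 𝒜 1) ∈ homComp 𝒜 (wordIdeal l o) 1 := by
      rw [htop]; trivial
    exact hin
  refine ⟨le_antisymm ?_ ?_, key⟩
  · rw [Ideal.span_le]
    rintro _ ⟨j, hj, rfl⟩
    change GradedRing.proj 𝒜 0 (l j) = 0
    rw [GradedRing.proj_apply]
    exact DirectSum.decompose_of_mem_ne 𝒜 (hl j hj) one_ne_zero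
  · refine (key (List.replicate r false) (by simp) ?_).trans (wordIdeal_replicate_le l r)
    simpa [List.count_replicate] using hd
end

section
/- Let R be a standard graded algebra over a field K, d > 0 a degree, and l_1,…,l_r linear forms of R. Suppose that for every word o = o_1,…,o_i with i ≤ r−2 one has dim_K (I_{o,c,s})_{d−|o|_c−1} = dim_K ((I_o : l_{i+2}) + (l_{i+1}))_{d−|o|_c−1}. Then condition (3) of property (Gr,d) holds: for every such word o, dim_K (I_{o,c,s})_{d−|o|_c−1} ≤ dim_K (I_{o,s,c})_{d−|o|_c−1}. -/
theorem wordIdealAux_append {R : Type*} [CommRing R] (l : ℕ → R) (o p : List Bool) :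
    ∀ (j : ℕ) (I : Ideal R),
      wordIdealAux l j I (o ++ p) = wordIdealAux l (j + o.length) (wordIdealAux l j I o) p := by
  induction o with
  | nil => intro j I; simp [wordIdealAux]
  | cons a o ih =>
    intro j I
    simp only [List.cons_append, wordIdealAux, List.length_cons]
    rw [ih]
    congr 1
    omega

theorem wordIdeal_append_sc {R : Type*} [CommRing R] (l : ℕ → R) (o : List Bool) :
    wordIdeal l (o ++ [false, true]) =
      (wordIdeal l o ⊔ Ideal.span {l o.length}).colon (Ideal.span {l (o.length + 1)}) := by
  simp [wordIdeal, wordIdealAux_append, wordIdealAux]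

theorem component_fg {K R : Type*} [Field K] [CommRing R] [Algebra K R]
    (𝒜 : ℕ → Submodule K R)
    (h0 : 𝒜 0 = (1 : Submodule K R)) (hstd : ∀ n, 𝒜 (n + 1) = 𝒜 1 * 𝒜 n)
    [FiniteDimensional K (𝒜 1)] (n : ℕ) : (𝒜 n).FG := by
  induction n with
  | zero => rw [h0, Submodule.one_eq_span]; exact Submodule.fg_span_singleton _
  | succ n ih =>
    rw [hstd]
    exact Submodule.FG.mul (Module.Finite.iff_fg.mp inferInstance) ih

/-- If for every word `o` with `|o| ≤ r - 2` one has
`dim (I_{o,c,s})_{d-|o|_c-1} = dim ((I_o : l_{i+2}) + (l_{i+1}))_{d-|o|_c-1}`,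
then condition (3) of property (Gr,d) holds:
`dim (I_{o,c,s})_{d-|o|_c-1} ≤ dim (I_{o,s,c})_{d-|o|_c-1}` for all such `o`. -/
theorem gr_condition_three_of_condition_four
    {K R : Type*} [Field K] [CommRing R] [Algebra K R]
    (𝒜 : ℕ → Submodule K R) [GradedAlgebra 𝒜]
    (h0 : 𝒜 0 = (1 : Submodule K R)) (hstd : ∀ n, 𝒜 (n + 1) = 𝒜 1 * 𝒜 n)
    [FiniteDimensional K (𝒜 1)] (d r : ℕ) (hd : 0 < d)
    (l : ℕ → R) (hl : ∀ j < r, l j ∈ 𝒜 1)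
    (h4 : ∀ o : List Bool, o.length + 2 ≤ r →
      homDim 𝒜 (wordIdeal l (o ++ [true, false])) (d - o.count true - 1) =
        homDim 𝒜 ((wordIdeal l o).colon (Ideal.span {l (o.length + 1)}) ⊔
          Ideal.span {l o.length}) (d - o.count true - 1)) :
    ∀ o : List Bool, o.length + 2 ≤ r →
      homDim 𝒜 (wordIdeal l (o ++ [true, false])) (d - o.count true - 1) ≤
        homDim 𝒜 (wordIdeal l (o ++ [false, true])) (d - o.count true - 1) := by
  intro o ho
  rw [h4 o ho, wordIdeal_append_sc]
  have hfin : FiniteDimensional K (𝒜 (d - o.count true - 1)) :=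
    Module.Finite.iff_fg.mpr (component_fg 𝒜 h0 hstd _)
  refine Submodule.finrank_mono (Submodule.comap_mono ?_)
  have hle : (wordIdeal l o).colon (Ideal.span {l (o.length + 1)}) ⊔ Ideal.span {l o.length} ≤
      (wordIdeal l o ⊔ Ideal.span {l o.length}).colon (Ideal.span {l (o.length + 1)}) := by
    refine sup_le ?_ ?_
    · exact Submodule.colon_mono le_sup_left le_rfl
    · intro x hx
      rw [Submodule.mem_colon]
      intro p _
      rw [smul_eq_mul]
      exact Ideal.mul_mem_right _ _ (Ideal.mem_sup_right hx)
  exact hle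
end

section
/- Let R = K[X_1,…,X_n]/J be a standard graded algebra over an infinite field K, let V ⊆ 𝔸(R_1) be an irreducible variety such that the r-fold product V^r = V × ⋯ × V is irreducible, and let o = o_1,…,o_i be a word in {c,s} with 0 ≤ i ≤ r. Then there exists a nonempty Zariski open subset U ⊆ V^r such that the Hilbert function of the ideal I_{l,o} (i.e. the function j ↦ dim_K (I_{l,o})_j) is the same for every r-tuple l = (l_1,…,l_r) ∈ U. -/
open MvPolynomial

/-- Uniform leading coefficients: over a domain, one nonzero `f` serves as leading coefficient
for an element of `J` in every leading exponent of `J`. -/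
theorem aux_exists_gen {A : Type*} [CommRing A] [IsDomain A] {n : ℕ}
    (m : MonomialOrder (Fin n)) (J : Ideal (MvPolynomial (Fin n) A)) :
    ∃ f : A, f ≠ 0 ∧ ∀ d : Fin n →₀ ℕ, (∃ h ∈ J, h ≠ 0 ∧ m.degree h = d) →
      ∃ G ∈ J, m.degree G = d ∧ G.coeff d = f := by
  classical
  set M : (Fin n →₀ ℕ) → Prop := fun d => ∃ h ∈ J, h ≠ 0 ∧ m.degree h = d with hM
  have hfin : {d | Minimal M d}.Finite :=
    WellQuasiOrderedLE.finite_of_isAntichain (setOfPred_minimal_antichain M)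
  have hc : ∀ d, ∃ h, M d → (h ∈ J ∧ h ≠ 0 ∧ m.degree h = d) := by
    intro d
    by_cases hd : M d
    · obtain ⟨h, hh⟩ := hd
      exact ⟨h, fun _ => hh⟩
    · exact ⟨0, fun h => absurd h hd⟩
  choose h hh using hc
  refine ⟨∏ d ∈ hfin.toFinset, m.leadingCoeff (h d), ?_, ?_⟩
  · rw [Finset.prod_ne_zero_iff]
    intro d hd
    rw [m.leadingCoeff_ne_zero_iff]
    rw [Set.Finite.mem_toFinset] at hd
    exact (hh d hd.prop).2.1
  · intro e he
    obtain ⟨d, hde, hd⟩ := exists_minimal_le_of_wellFoundedLT M e he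
    have hdm : d ∈ hfin.toFinset := by rw [Set.Finite.mem_toFinset]; exact hd
    obtain ⟨hJ, h0, hdeg⟩ := hh d hd.prop
    set c := ∏ d' ∈ hfin.toFinset.erase d, m.leadingCoeff (h d') with hcdef
    have hc0 : c ≠ 0 := by
      rw [hcdef, Finset.prod_ne_zero_iff]
      intro d' hd'
      rw [m.leadingCoeff_ne_zero_iff]
      have := Finset.mem_of_mem_erase hd'
      rw [Set.Finite.mem_toFinset] at this
      exact (hh d' this.prop).2.1
    refine ⟨monomial (e - d) c * h d, J.mul_mem_left _ hJ, ?_, ?_⟩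
    · rw [m.degree_mul (by simpa using hc0) h0, m.degree_monomial, if_neg hc0, hdeg]
      exact tsub_add_cancel_of_le hde
    · rw [← Finset.prod_erase_mul _ _ hdm, ← hcdef]
      have hcm := coeff_monomial_mul d (e - d) c (h d)
      rw [tsub_add_cancel_of_le hde] at hcm
      rw [hcm, MonomialOrder.leadingCoeff, hdeg]

/-- One reduction step lowers the degree. -/
theorem aux_step {A : Type*} [CommRing A] [IsDomain A] {n : ℕ}
    (m : MonomialOrder (Fin n)) (q G : MvPolynomial (Fin n) A) (f c : A)
    (hdeg : m.degree G = m.degree q)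
    (hcoef : f * q.coeff (m.degree q) = c * G.coeff (m.degree q))
    (hne : C f * q - C c * G ≠ 0) :
    m.toSyn (m.degree (C f * q - C c * G)) < m.toSyn (m.degree q) := by
  refine lt_of_le_of_ne ?_ ?_
  · rw [m.degree_le_iff]
    intro b hb
    by_contra hlt
    rw [not_le] at hlt
    rw [mem_support_iff] at hb
    apply hb
    rw [coeff_sub, coeff_C_mul, coeff_C_mul, m.coeff_eq_zero_of_lt hlt,
      m.coeff_eq_zero_of_lt (by rw [hdeg]; exact hlt)]
    simp
  · intro h
    have h' := m.toSyn.injective h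
    have := m.degree_mem_support hne
    rw [mem_support_iff, h'] at this
    apply this
    rw [coeff_sub, coeff_C_mul, coeff_C_mul, hcoef, sub_self]

/-- Pseudo-division. -/
theorem aux_division {A : Type*} [CommRing A] [IsDomain A] {n : ℕ}
    (m : MonomialOrder (Fin n)) (J : Ideal (MvPolynomial (Fin n) A)) (f : A)
    (hf : ∀ d : Fin n →₀ ℕ, (∃ h ∈ J, h ≠ 0 ∧ m.degree h = d) →
      ∃ G ∈ J, m.degree G = d ∧ G.coeff d = f) (p : MvPolynomial (Fin n) A) :
    ∃ N : ℕ, ∃ q ∈ J, ∃ s : MvPolynomial (Fin n) A,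
      s ∈ restrictSupport A {d | ¬ ∃ h ∈ J, h ≠ 0 ∧ m.degree h = d} ∧
      C (f ^ N) * p = q + s := by
  induction hd : m.toSyn (m.degree p) using WellFoundedLT.induction generalizing p with
  | ind d ih =>
  by_cases hM : ∃ h ∈ J, h ≠ 0 ∧ m.degree h = m.degree p
  · obtain ⟨G, hGJ, hGd, hGc⟩ := hf _ hM
    set p' := C f * p - C (p.coeff (m.degree p)) * G with hp'
    by_cases h0 : p' = 0
    · refine ⟨1, C (p.coeff (m.degree p)) * G, J.mul_mem_left _ hGJ, 0, zero_mem _, ?_⟩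
      rw [pow_one, add_zero]
      exact sub_eq_zero.mp h0
    · have hlt := aux_step m p G f (p.coeff (m.degree p)) hGd (by rw [hGc, mul_comm]) h0
      obtain ⟨N, q, hq, s, hs, h⟩ := ih _ (hd ▸ hlt) p' rfl
      refine ⟨N + 1, q + C (f ^ N) * (C (p.coeff (m.degree p)) * G),
        J.add_mem hq (J.mul_mem_left _ (J.mul_mem_left _ hGJ)), s, hs, ?_⟩
      have : C (f ^ N) * (C f * p) = C (f ^ N) * p' +
        C (f ^ N) * (C (p.coeff (m.degree p)) * G) := by rw [hp']; ring
      rw [pow_succ, C_mul, mul_assoc, this, h]; ring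
  · set T := monomial (m.degree p) (p.coeff (m.degree p)) with hT
    have hTs : T ∈ restrictSupport A {d | ¬ ∃ h ∈ J, h ≠ 0 ∧ m.degree h = d} := by
      rw [hT, monomial_mem_restrictSupport]; left; exact hM
    by_cases h0 : p - T = 0
    · refine ⟨0, 0, zero_mem _, T, hTs, ?_⟩
      rw [sub_eq_zero.mp h0]; simp
    · have hp0 : p ≠ 0 := by
        rintro rfl
        apply h0
        simp [hT]
      have hpc := (m.coeff_degree_ne_zero_iff).2 hp0
      have hlt := aux_step m p T 1 1 (by classical rw [hT, m.degree_monomial, if_neg hpc])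
        (by rw [hT, coeff_monomial, if_pos rfl]) (by simpa using h0)
      simp only [C_1, one_mul] at hlt
      obtain ⟨N, q, hq, s, hs, h⟩ := ih _ (hd ▸ hlt) (p - T) rfl
      refine ⟨N, q, hq, s + C (f ^ N) * T, ?_, ?_⟩
      · refine add_mem hs ?_
        rw [← smul_eq_C_mul]
        exact Submodule.smul_mem _ _ hTs
      · have : C (f ^ N) * p = C (f ^ N) * (p - T) + C (f ^ N) * T := by ring
        rw [this, h]; ring

/-- Generic flatness in elementary form. -/
theorem aux_flat {A K : Type*} [CommRing A] [IsDomain A] [Field K] {n : ℕ}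
    (m : MonomialOrder (Fin n)) (J : Ideal (MvPolynomial (Fin n) A)) (f : A)
    (hf : ∀ d : Fin n →₀ ℕ, (∃ h ∈ J, h ≠ 0 ∧ m.degree h = d) →
      ∃ G ∈ J, m.degree G = d ∧ G.coeff d = f)
    (φ : A →+* K) (q : MvPolynomial (Fin n) A) (hq : q ∈ J)
    (hs : map φ q ∈ restrictSupport K {d | ¬ ∃ h ∈ J, h ≠ 0 ∧ m.degree h = d}) :
    ∃ N : ℕ, C (f ^ N) * q ∈ Ideal.map (C : A →+* MvPolynomial (Fin n) A) (RingHom.ker φ) * J := by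
  induction hd : m.toSyn (m.degree q) using WellFoundedLT.induction generalizing q with
  | ind d ih =>
  by_cases hq0 : q = 0
  · exact ⟨0, by simp [hq0]⟩
  have hM : ∃ h ∈ J, h ≠ 0 ∧ m.degree h = m.degree q := ⟨q, hq, hq0, rfl⟩
  obtain ⟨G, hGJ, hGd, hGc⟩ := hf _ hM
  set c := q.coeff (m.degree q) with hc
  have hφc : φ c = 0 := by
    by_contra hne
    have : m.degree q ∈ (map φ q).support := by
      rw [mem_support_iff, coeff_map]; exact hne
    exact ((mem_restrictSupport_iff K).1 hs this) hM
  have hcG : C c * G ∈ Ideal.map (C : A →+* MvPolynomial (Fin n) A) (RingHom.ker φ) * J :=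
    Ideal.mul_mem_mul (Ideal.mem_map_of_mem _ hφc) hGJ
  set q' := C f * q - C c * G with hq'
  by_cases h0 : q' = 0
  · refine ⟨1, ?_⟩
    rw [pow_one, sub_eq_zero.mp h0]; exact hcG
  · have hlt := aux_step m q G f c hGd (by rw [hGc, mul_comm]) h0
    have hq'J : q' ∈ J := J.sub_mem (J.mul_mem_left _ hq) (J.mul_mem_left _ hGJ)
    have hmap : map φ q' = φ f • map φ q := by
      rw [hq', map_sub, map_mul, map_mul, map_C, map_C, hφc, smul_eq_C_mul]; simp
    obtain ⟨N, h⟩ := ih _ (hd ▸ hlt) q' hq'J (by rw [hmap]; exact Submodule.smul_mem _ _ hs) rfl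
    refine ⟨N + 1, ?_⟩
    have : C (f ^ (N + 1)) * q = C (f ^ N) * q' + C (f ^ N) * (C c * G) := by
      rw [hq', pow_succ, C_mul]; ring
    rw [this]
    exact add_mem h (Ideal.mul_mem_left _ _ hcG)

theorem aux_kerC_map {A K : Type*} [CommRing A] [Field K] {n : ℕ} (φ : A →+* K)
    (s : MvPolynomial (Fin n) A)
    (hs : s ∈ Ideal.map (C : A →+* MvPolynomial (Fin n) A) (RingHom.ker φ)) : map φ s = 0 := by
  have : Ideal.map (C : A →+* MvPolynomial (Fin n) A) (RingHom.ker φ) ≤ RingHom.ker (map φ) := by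
    rw [Ideal.map_le_iff_le_comap]
    intro a ha
    rw [Ideal.mem_comap, RingHom.mem_ker, map_C, (RingHom.mem_ker).1 ha, C_0]
  exact this hs

theorem aux_mem_of_C_pow {K : Type*} [Field K] {n : ℕ} (I : Ideal (MvPolynomial (Fin n) K))
    (a : K) (ha : a ≠ 0) (p : MvPolynomial (Fin n) K) (h : C a * p ∈ I) : p ∈ I := by
  have : p = C a⁻¹ * (C a * p) := by
    rw [← mul_assoc, ← C_mul, inv_mul_cancel₀ ha, C_1, one_mul]
  rw [this]
  exact I.mul_mem_left _ h

/-- Fibrewise complements. -/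
theorem aux_compl {A K : Type*} [CommRing A] [IsDomain A] [Field K] {n : ℕ}
    (J : Ideal (MvPolynomial (Fin n) A)) :
    ∃ f : A, f ≠ 0 ∧ ∃ B : Set (Fin n →₀ ℕ), ∀ φ : A →+* K, Function.Surjective φ → φ f ≠ 0 →
      (∀ p, ∃ q ∈ Ideal.map (map φ) J, ∃ s ∈ restrictSupport K B, p = q + s) ∧
      (∀ p ∈ Ideal.map (map φ) J, p ∈ restrictSupport K B → p = 0) := by
  let m : MonomialOrder (Fin n) := MonomialOrder.lex
  obtain ⟨f, hf0, hf⟩ := aux_exists_gen m J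
  refine ⟨f, hf0, {d | ¬ ∃ h ∈ J, h ≠ 0 ∧ m.degree h = d}, fun φ hφ hφf => ⟨?_, ?_⟩⟩
  · intro p
    obtain ⟨p, rfl⟩ := map_surjective φ hφ p
    obtain ⟨N, q, hq, s, hs, h⟩ := aux_division m J f hf p
    have hpow : (φ f) ^ N ≠ 0 := pow_ne_zero _ hφf
    have h' := congrArg (map φ) h
    rw [map_mul, map_C, map_add, map_pow] at h'
    refine ⟨C ((φ f ^ N)⁻¹) * map φ q, Ideal.mul_mem_left _ _ (Ideal.mem_map_of_mem _ hq),
      C ((φ f ^ N)⁻¹) * map φ s, ?_, ?_⟩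
    · rw [← smul_eq_C_mul]
      refine Submodule.smul_mem _ _ ?_
      rw [mem_restrictSupport_iff] at hs ⊢
      refine subset_trans ?_ hs
      exact_mod_cast support_map_subset φ s
    · rw [← mul_add, ← h', ← mul_assoc, ← C_mul, inv_mul_cancel₀ hpow, C_1, one_mul]
  · intro p hp hps
    obtain ⟨q, hq, rfl⟩ := (Ideal.mem_map_iff_of_surjective _ (map_surjective φ hφ)).1 hp
    obtain ⟨N, h⟩ := aux_flat m J f hf φ q hq hps
    have h2 : Ideal.map (C : A →+* MvPolynomial (Fin n) A) (RingHom.ker φ) * J ≤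
      Ideal.map (C : A →+* MvPolynomial (Fin n) A) (RingHom.ker φ) := Ideal.mul_le_left
    have h0 := aux_kerC_map φ _ (h2 h)
    rw [map_mul, map_C, map_pow] at h0
    rcases mul_eq_zero.1 h0 with h1 | h1
    · exact absurd (C_eq_zero.1 h1) (pow_ne_zero _ hφf)
    · exact h1

/-- Colon ideals commute with generic specialization. -/
theorem aux_colon {A K : Type*} [CommRing A] [IsDomain A] [Field K] {n : ℕ}
    (J : Ideal (MvPolynomial (Fin n) A)) (l : MvPolynomial (Fin n) A) :
    ∃ f : A, f ≠ 0 ∧ ∀ φ : A →+* K, Function.Surjective φ → φ f ≠ 0 →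
      Ideal.map (map φ) (J.colon {l}) = (Ideal.map (map φ) J).colon {map φ l} := by
  let m : MonomialOrder (Fin n) := MonomialOrder.lex
  obtain ⟨f, hf0, hf⟩ := aux_exists_gen m (J ⊔ Ideal.span {l})
  refine ⟨f, hf0, fun φ hφ hφf => le_antisymm ?_ ?_⟩
  · rw [Ideal.map_le_iff_le_comap]
    intro u hu
    rw [Submodule.mem_colon_singleton, smul_eq_mul] at hu
    rw [Ideal.mem_comap, Submodule.mem_colon_singleton, smul_eq_mul, ← map_mul]
    exact Ideal.mem_map_of_mem _ hu
  · intro u hu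
    rw [Submodule.mem_colon_singleton, smul_eq_mul] at hu
    obtain ⟨u, rfl⟩ := map_surjective φ hφ u
    obtain ⟨q, hq, hqu⟩ := (Ideal.mem_map_iff_of_surjective _ (map_surjective φ hφ)).1 hu
    have hh : u * l - q ∈ J ⊔ Ideal.span {l} := by
      refine sub_mem (Ideal.mul_mem_left _ _ ?_) (Ideal.mem_sup_left hq)
      exact Ideal.mem_sup_right (Ideal.mem_span_singleton_self l)
    have hz : map φ (u * l - q) = 0 := by rw [map_sub, map_mul, hqu, sub_self]
    obtain ⟨N, hN⟩ := aux_flat m _ f hf φ _ hh (by rw [hz]; exact zero_mem _)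
    rw [Ideal.mul_sup] at hN
    obtain ⟨w, hw, z, hz', hwz⟩ := Submodule.mem_sup.1 hN
    obtain ⟨s, hs, rfl⟩ := Ideal.mem_mul_span_singleton.1 hz'
    have h2 : Ideal.map (C : A →+* MvPolynomial (Fin n) A) (RingHom.ker φ) * J ≤ J :=
      Ideal.mul_le_right
    have hwJ : w ∈ J := h2 hw
    have key : C (f ^ N) * u - s ∈ J.colon {l} := by
      rw [Submodule.mem_colon_singleton, smul_eq_mul]
      have : (C (f ^ N) * u - s) * l = w + C (f ^ N) * q := by
        linear_combination -hwz
      rw [this]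
      exact add_mem hwJ (J.mul_mem_left _ hq)
    have := Ideal.mem_map_of_mem (map φ) key
    rw [map_sub, map_mul, map_C, aux_kerC_map φ s hs, sub_zero, map_pow] at this
    exact aux_mem_of_C_pow _ _ (pow_ne_zero _ hφf) _ this

theorem aux_colon_span {R : Type*} [CommRing R] (I : Ideal R) (l : R) :
    I.colon (Ideal.span {l} : Ideal R) = I.colon {l} := by
  ext u
  rw [Submodule.mem_colon_singleton, Submodule.mem_colon, smul_eq_mul]
  constructor
  · intro h
    exact h l (Ideal.mem_span_singleton_self l)
  · intro h s hs
    obtain ⟨c, rfl⟩ := Ideal.mem_span_singleton.1 hs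
    rw [smul_eq_mul, ← mul_assoc]
    exact I.mul_mem_right _ h

/-- The word ideals come, generically, from a single ideal over the coordinate ring. -/
theorem aux_word {A K R X : Type*} [CommRing A] [IsDomain A] [Field K] [CommRing R] {n : ℕ}
    (g : MvPolynomial (Fin n) K →+* R) (hg : Function.Surjective g)
    (ev : X → A →+* K) (hev : ∀ x, Function.Surjective (ev x))
    (lx : X → ℕ → R) (L : ℕ → MvPolynomial (Fin n) A)
    (hL : ∀ x t, g (map (ev x) (L t)) = lx x t) (o : List Bool) :
    ∀ (j : ℕ) (J : Ideal (MvPolynomial (Fin n) A)) (f : A) (I : X → Ideal R), f ≠ 0 →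
      (∀ x, ev x f ≠ 0 → Ideal.map (map (ev x)) J = Ideal.comap g (I x)) →
      ∃ (J' : Ideal (MvPolynomial (Fin n) A)) (f' : A), f' ≠ 0 ∧
        ∀ x, ev x f' ≠ 0 →
          Ideal.map (map (ev x)) J' = Ideal.comap g (wordIdealAux (lx x) j (I x) o) := by
  induction o with
  | nil =>
    intro j J f I hf h
    exact ⟨J, f, hf, h⟩
  | cons a o ih =>
    intro j J f I hf h
    cases a with
    | false =>
      obtain ⟨J', f', hf', h'⟩ := ih (j + 1) (J ⊔ Ideal.span {L j}) f
        (fun x => I x ⊔ Ideal.span {lx x j}) hf (by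
          intro x hx
          rw [Ideal.map_sup, h x hx, Ideal.map_span, Set.image_singleton]
          have h1 : I x ⊔ Ideal.span {lx x j} =
              Ideal.map g (Ideal.comap g (I x) ⊔ Ideal.span {map (ev x) (L j)}) := by
            rw [Ideal.map_sup, Ideal.map_comap_of_surjective g hg, Ideal.map_span,
              Set.image_singleton, hL]
          rw [h1, Ideal.comap_map_of_surjective g hg]
          refine (sup_eq_left.2 ?_).symm
          exact le_trans (Ideal.comap_mono bot_le) le_sup_left)
      refine ⟨J', f', hf', fun x hx => ?_⟩
      rw [h' x hx]
      simp [wordIdealAux]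
    | true =>
      obtain ⟨f₁, hf₁, h₁⟩ := aux_colon (K := K) J (L j)
      obtain ⟨J', f', hf', h'⟩ := ih (j + 1) (J.colon {L j}) (f * f₁)
        (fun x => (I x).colon {lx x j}) (mul_ne_zero hf hf₁) (by
          intro x hx
          rw [map_mul] at hx
          rw [h₁ (ev x) (hev x) (right_ne_zero_of_mul hx), h x (left_ne_zero_of_mul hx)]
          ext u
          rw [Submodule.mem_colon_singleton, smul_eq_mul, Ideal.mem_comap, Ideal.mem_comap,
            Submodule.mem_colon_singleton, smul_eq_mul, map_mul, hL])
      refine ⟨J', f', hf', fun x hx => ?_⟩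
      rw [h' x hx]
      simp only [wordIdealAux, if_true, aux_colon_span]

theorem aux_hom {K R : Type*} [Field K] [CommRing R] [Algebra K R]
    (𝒜 : ℕ → Submodule K R) [GradedAlgebra 𝒜] (l : ℕ → R) (hl : ∀ t, l t ∈ 𝒜 1)
    (o : List Bool) : ∀ (j : ℕ) (I : Ideal R), I.IsHomogeneous 𝒜 →
      (wordIdealAux l j I o).IsHomogeneous 𝒜 := by
  induction o with
  | nil => intro j I h; exact h
  | cons a o ih =>
    intro j I h
    cases a with
    | false =>
      simp only [wordIdealAux]
      refine ih _ _ ?_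
      rw [if_neg (by simp)]
      refine h.sup (Ideal.homogeneous_span 𝒜 _ ?_)
      rintro x rfl
      exact ⟨1, hl j⟩
    | true =>
      simp only [wordIdealAux, if_true, aux_colon_span]
      refine ih _ _ ?_
      intro i u hu
      rw [Submodule.mem_colon_singleton, smul_eq_mul] at hu ⊢
      have := h (i + 1) hu
      rwa [DirectSum.coe_decompose_mul_add_of_right_mem 𝒜 (hl j)] at this

theorem aux_graded {K R : Type*} [Field K] [CommRing R] [Algebra K R]
    (𝒜 : ℕ → Submodule K R) [GradedAlgebra 𝒜] {n : ℕ}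
    (g : MvPolynomial (Fin n) K →ₐ[K] R) (hgX : ∀ i, g (X i) ∈ 𝒜 1) (e : Fin n →₀ ℕ) (c : K) :
    g (monomial e c) ∈ 𝒜 e.degree := by
  rw [monomial_eq, map_mul, ← algebraMap_eq, AlgHom.commutes, ← Algebra.smul_def]
  refine Submodule.smul_mem _ _ ?_
  rw [Finsupp.prod, map_prod, Finsupp.degree_apply]
  refine SetLike.prod_mem_graded 𝒜 _ _ fun i _ => ?_
  rw [map_pow]
  simpa using SetLike.pow_mem_graded (A := 𝒜) (e i) (hgX i)

theorem aux_proj {K R : Type*} [Field K] [CommRing R] [Algebra K R]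
    (𝒜 : ℕ → Submodule K R) [GradedAlgebra 𝒜] {n : ℕ}
    (g : MvPolynomial (Fin n) K →ₐ[K] R) (hgX : ∀ i, g (X i) ∈ 𝒜 1) (d : ℕ)
    (p : MvPolynomial (Fin n) K) :
    (DirectSum.decompose 𝒜 (g p) d : R) = g (homogeneousComponent d p) := by
  induction p using MvPolynomial.induction_on' with
  | monomial e c =>
    have hm := aux_graded 𝒜 g hgX e c
    rw [homogeneousComponent_of_mem (isHomogeneous_monomial c rfl)]
    split_ifs with h
    · subst h
      rw [DirectSum.decompose_of_mem_same 𝒜 hm]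
    · rw [DirectSum.decompose_of_mem_ne 𝒜 hm (fun h' => h h'.symm), map_zero]
  | add p q hp hq =>
    rw [map_add, DirectSum.decompose_add, DirectSum.add_apply, Submodule.coe_add, hp, hq,
      map_add, map_add]

theorem aux_dim {K R : Type*} [Field K] [CommRing R] [Algebra K R]
    (𝒜 : ℕ → Submodule K R) [GradedAlgebra 𝒜] {n : ℕ}
    (g : MvPolynomial (Fin n) K →ₐ[K] R) (hg : Function.Surjective g)
    (hgX : ∀ i, g (X i) ∈ 𝒜 1) (d : ℕ) (I : Ideal R) (hI : I.IsHomogeneous 𝒜)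
    (B : Set (Fin n →₀ ℕ))
    (h1 : ∀ p, ∃ q ∈ Ideal.comap g I, ∃ s ∈ restrictSupport K B, p = q + s)
    (h2 : ∀ p ∈ Ideal.comap g I, p ∈ restrictSupport K B → p = 0) :
    Module.finrank K (𝒜 d ⧸ homComp 𝒜 I d) =
      Module.finrank K (restrictSupport K (B ∩ {e | e.degree = d})) := by
  have hmem : ∀ s ∈ restrictSupport K (B ∩ {e : Fin n →₀ ℕ | e.degree = d}), g s ∈ 𝒜 d := by
    intro s hs
    rw [mem_restrictSupport_iff] at hs
    rw [s.as_sum, map_sum]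
    refine sum_mem fun e he => ?_
    have := aux_graded 𝒜 g hgX e (coeff e s)
    rwa [(hs he).2] at this
  let F : restrictSupport K (B ∩ {e : Fin n →₀ ℕ | e.degree = d}) →ₗ[K] 𝒜 d :=
    (g.toLinearMap.domRestrict _).codRestrict (𝒜 d) (fun s => hmem s.1 s.2)
  have hF : ∀ s, (F s : R) = g s := fun s => rfl
  refine (LinearEquiv.finrank_eq (LinearEquiv.ofBijective ((homComp 𝒜 I d).mkQ ∘ₗ F) ⟨?_, ?_⟩)).symm
  · rw [← LinearMap.ker_eq_bot, LinearMap.ker_eq_bot']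
    intro s hs
    rw [LinearMap.comp_apply, Submodule.mkQ_apply, Submodule.Quotient.mk_eq_zero] at hs
    have hs' : g s ∈ I := hs
    exact Subtype.ext (h2 s hs' (restrictSupport_mono K Set.inter_subset_left s.2))
  · intro a
    obtain ⟨a, rfl⟩ := Submodule.mkQ_surjective _ a
    obtain ⟨p, hp⟩ := hg a
    obtain ⟨q, hq, s, hs, rfl⟩ := h1 p
    have hsd : homogeneousComponent d s ∈
        restrictSupport K (B ∩ {e : Fin n →₀ ℕ | e.degree = d}) := by
      rw [mem_restrictSupport_iff] at hs ⊢
      intro e he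
      rw [Finset.mem_coe, mem_support_iff, coeff_homogeneousComponent] at he
      split_ifs at he with hed
      · exact ⟨hs (mem_support_iff.2 he), hed⟩
      · exact absurd rfl he
    refine ⟨⟨_, hsd⟩, ?_⟩
    rw [LinearMap.comp_apply, ← sub_eq_zero, ← map_sub, Submodule.mkQ_apply,
      Submodule.Quotient.mk_eq_zero]
    change ((F _ - a : 𝒜 d) : R) ∈ I
    rw [Submodule.coe_sub, hF]
    have h3 : (a : R) = g (homogeneousComponent d q) + g (homogeneousComponent d s) := by
      rw [← map_add, ← map_add, ← aux_proj 𝒜 g hgX, hp, DirectSum.decompose_coe,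
        DirectSum.of_eq_same]
    rw [h3, ← aux_proj 𝒜 g hgX d q, sub_add_cancel_right]
    exact I.neg_mem (hI d hq)

theorem aux_fin {K R : Type*} [Field K] [CommRing R] [Algebra K R]
    (𝒜 : ℕ → Submodule K R)
    (h0 : 𝒜 0 = (1 : Submodule K R)) (hstd : ∀ n, 𝒜 (n + 1) = 𝒜 1 * 𝒜 n)
    [FiniteDimensional K (𝒜 1)] (d : ℕ) : FiniteDimensional K (𝒜 d) := by
  have : (𝒜 d).FG := by
    induction d with
    | zero => rw [h0, Submodule.one_eq_span]; exact Submodule.fg_span_singleton 1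
    | succ d ih =>
      rw [hstd]
      exact Submodule.FG.mul (Module.Finite.iff_fg.1 inferInstance) ih
  exact Module.Finite.iff_fg.2 this

/-- **Proposition (constancy of the Hilbert function).** Let `R = K[X_1,…,X_n]/J` be a
standard graded algebra over an infinite field `K` (presented by a graded surjection `g`
from a polynomial ring), let `V ⊆ 𝔸(R_1)` be an irreducible variety such that
`V^r` is irreducible, and let `o` be a word in `{c,s}` of length `≤ r`.  Then there is a
nonempty Zariski open subset `U` of `V^r` on which the Hilbert function
`j ↦ dim_K (I_{l,o})_j` is constant. -/
theorem prop_constant_hilbert_function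
    {K R : Type*} [Field K] [Infinite K] [CommRing R] [Algebra K R]
    (𝒜 : ℕ → Submodule K R) [GradedAlgebra 𝒜]
    (h0 : 𝒜 0 = (1 : Submodule K R)) (hstd : ∀ n, 𝒜 (n + 1) = 𝒜 1 * 𝒜 n)
    [FiniteDimensional K (𝒜 1)]
    (n : ℕ) (g : MvPolynomial (Fin n) K →ₐ[K] R) (hg : Function.Surjective g)
    (hgX : ∀ i, g (MvPolynomial.X i) ∈ 𝒜 1)
    (V : Set (𝒜 1)) (hV : IsIrredVariety K V)
    (r : ℕ) (hVr : IsIrredVariety K {x : Fin r → 𝒜 1 | ∀ t, x t ∈ V})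
    (o : List Bool) (ho : o.length ≤ r) :
    ∃ U : Set (Fin r → 𝒜 1),
      (∃ W : Set (Fin r → 𝒜 1), IsZOpen K W ∧ U = {x | ∀ t, x t ∈ V} ∩ W) ∧
      U.Nonempty ∧
      ∃ H : ℕ → ℕ, ∀ x ∈ U, ∀ j : ℕ,
        homDim 𝒜 (wordIdeal (fun t => if h : t < r then (x ⟨t, h⟩ : R) else 0) o) j = H j := by
  classical
  set Vr : Set (Fin r → 𝒜 1) := {x | ∀ t, x t ∈ V} with hVrdef
  let res : ((Fin r → 𝒜 1) → K) →ₐ[K] (Vr → K) :=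
    AlgHom.pi (fun x : Vr => Pi.evalAlgHom K (fun _ : Fin r → 𝒜 1 => K) x.1)
  have hres : ∀ F x, res F x = F x.1 := fun F x => rfl
  let A : Subalgebra K (Vr → K) := (polyFuns K (Fin r → 𝒜 1)).map res
  have hzc : ∀ F ∈ polyFuns K (Fin r → 𝒜 1), IsZClosed K {v | F v = 0} := by
    intro F hF
    refine ⟨{F}, ?_, ?_⟩
    · rintro f rfl; exact hF
    · ext v; simp
  have : Nonempty Vr := hVr.2.1.to_subtype
  have : Nontrivial A := A.toSubring.instNontrivialSubtypeMem
  have : NoZeroDivisors A := by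
    refine ⟨?_⟩
    rintro ⟨a, F, hF, rfl⟩ ⟨b, G, hG, rfl⟩ hab
    have hab' : ∀ x : Vr, F x.1 * G x.1 = 0 := by
      intro x
      exact congrFun (congrArg Subtype.val hab) x
    rcases hVr.2.2 _ _ (hzc F hF) (hzc G hG) (fun x hx => mul_eq_zero.1 (hab' ⟨x, hx⟩)) with h | h
    · left
      apply Subtype.ext
      funext x
      exact h x.2
    · right
      apply Subtype.ext
      funext x
      exact h x.2
  have : IsDomain A := NoZeroDivisors.to_isDomain A
  let ev : Vr → A →+* K := fun x => (Pi.evalRingHom (fun _ : Vr => K) x).comp A.val.toRingHom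
  have hevd : ∀ x a, ev x a = a.1 x := fun x a => rfl
  have hevC : ∀ x (c : K), ev x (algebraMap K A c) = c := fun x c => rfl
  have hev : ∀ x, Function.Surjective (ev x) := fun x c => ⟨algebraMap K A c, hevC x c⟩
  have hevcomp : ∀ x, (ev x).comp (algebraMap K A) = RingHom.id K := fun x => rfl
  let lx : Vr → ℕ → R := fun x t => if h : t < r then (x.1 ⟨t, h⟩ : R) else 0
  let b := Module.finBasis K (𝒜 1)
  choose p hp using fun k => hg (b k : R)
  have hcoord : ∀ (t : Fin r) k, (res fun y => b.coord k (y t)) ∈ A := by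
    intro t k
    refine ⟨_, Algebra.subset_adjoin ⟨(b.coord k) ∘ₗ LinearMap.proj t, rfl⟩, rfl⟩
  let L : ℕ → MvPolynomial (Fin n) A := fun t =>
    if h : t < r then ∑ k, C (⟨_, hcoord ⟨t, h⟩ k⟩ : A) * map (algebraMap K A) (p k) else 0
  have hL : ∀ x t, (g : MvPolynomial (Fin n) K →+* R) (map (ev x) (L t)) = lx x t := by
    intro x t
    by_cases h : t < r
    · simp only [L, lx, dif_pos h]
      rw [map_sum, map_sum]
      have h1 := congrArg (Submodule.subtype (𝒜 1)) (b.sum_repr (x.1 ⟨t, h⟩))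
      rw [map_sum] at h1
      refine Eq.trans (Finset.sum_congr rfl fun k _ => ?_) h1
      rw [map_mul, map_C, map_map, hevcomp, map_id, hevd, map_mul, map_smul]
      change g (C _) * g (p k) = _
      rw [hp, ← algebraMap_eq, AlgHom.commutes, ← Algebra.smul_def]
      rfl
    · simp only [L, lx, dif_neg h, map_zero]
  have hgs : Function.Surjective (g : MvPolynomial (Fin n) K →+* R) := hg
  obtain ⟨J, f, hf, hJ⟩ := aux_word (g : MvPolynomial (Fin n) K →+* R) hgs ev hev lx L hL o 0
    (Ideal.map (map (algebraMap K A)) (RingHom.ker (g : MvPolynomial (Fin n) K →+* R)))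
    1 (fun _ => ⊥) one_ne_zero (by
      intro x _
      rw [Ideal.map_map]
      have : (map (ev x)).comp (map (algebraMap K A)) =
          RingHom.id (MvPolynomial (Fin n) K) := by
        ext q <;> simp [hevC]
      rw [this, Ideal.map_id]
      rfl)
  obtain ⟨f₂, hf₂, B, hB⟩ := aux_compl (K := K) J
  obtain ⟨F, hF, hFf⟩ := (f * f₂).2
  refine ⟨Vr ∩ {v | F v ≠ 0}, ⟨{v | F v ≠ 0}, ?_, rfl⟩, ?_,
    fun j => Module.finrank K (𝒜 j) -
      Module.finrank K (restrictSupport K (B ∩ {e : Fin n →₀ ℕ | e.degree = j})), ?_⟩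
  · have : {v : Fin r → 𝒜 1 | F v ≠ 0}ᶜ = {v | F v = 0} := by ext v; simp
    rw [IsZOpen, this]
    exact hzc F hF
  · by_contra hne
    apply mul_ne_zero hf hf₂
    apply Subtype.ext
    rw [← hFf]
    funext x
    by_contra hx
    exact hne ⟨x.1, x.2, hx⟩
  · rintro x ⟨hxV, hxF⟩ j
    have hx : ev ⟨x, hxV⟩ (f * f₂) ≠ 0 := by
      rw [hevd, ← hFf]
      exact hxF
    rw [map_mul] at hx
    have hJx := hJ ⟨x, hxV⟩ (left_ne_zero_of_mul hx)
    obtain ⟨h1, h2⟩ := hB (ev ⟨x, hxV⟩) (hev _) (right_ne_zero_of_mul hx)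
    rw [hJx] at h1 h2
    have hhom : (wordIdealAux (lx ⟨x, hxV⟩) 0 ⊥ o).IsHomogeneous 𝒜 := by
      refine aux_hom 𝒜 _ (fun t => ?_) o 0 ⊥ (Ideal.IsHomogeneous.bot 𝒜)
      by_cases h : t < r
      · simp only [lx, dif_pos h]; exact (x ⟨t, h⟩).2
      · simp only [lx, dif_neg h]; exact zero_mem _
    have hd := aux_dim 𝒜 g hg hgX j _ hhom B h1 h2
    have := aux_fin 𝒜 h0 hstd j
    have hq := Submodule.finrank_quotient_add_finrank
      (homComp 𝒜 (wordIdealAux (lx ⟨x, hxV⟩) 0 ⊥ o) j)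
    rw [hd] at hq
    change Module.finrank K (homComp 𝒜 (wordIdealAux (lx ⟨x, hxV⟩) 0 ⊥ o) j) = _
    exact Nat.eq_sub_of_add_eq' hq
end

section
/- Let K be a field and let V ⊆ 𝔸^n_K be an irreducible affine variety (the zero set of a prime ideal P ⊆ K[Y_1,…,Y_n]). If K is algebraically closed, or if the defining ideal P of V is homogeneous, then for every r ≥ 1 the r-fold product V^r = V × ⋯ × V ⊆ 𝔸^{rn}_K is irreducible. -/
theorem polyFuns_comp {K V W : Type*} [Field K] [AddCommGroup V] [Module K V]
    [AddCommGroup W] [Module K W] (L : V →ₗ[K] W) (c : W) {f : W → K}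
    (hf : f ∈ polyFuns K W) : (fun v => f (L v + c)) ∈ polyFuns K V := by
  unfold polyFuns at hf
  induction hf using Algebra.adjoin_induction with
  | mem g hg =>
    obtain ⟨φ, rfl⟩ := hg
    have h : (fun v => φ (L v + c)) = ⇑(φ.comp L) + algebraMap K (V → K) (φ c) := by
      ext v
      simp
    rw [h]
    exact add_mem (Algebra.subset_adjoin ⟨_, rfl⟩) (Subalgebra.algebraMap_mem _ _)
  | algebraMap a => exact Subalgebra.algebraMap_mem (polyFuns K V) a
  | add f g _ _ hf hg => exact add_mem hf hg
  | mul f g _ _ hf hg => exact mul_mem hf hg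

theorem IsZClosed.preimage_affine {K V W : Type*} [Field K] [AddCommGroup V] [Module K V]
    [AddCommGroup W] [Module K W] (L : V →ₗ[K] W) (c : W) {Z : Set W}
    (hZ : IsZClosed K Z) : IsZClosed K {v | L v + c ∈ Z} := by
  obtain ⟨S, hS, rfl⟩ := hZ
  refine ⟨{g | ∃ f ∈ S, g = fun v => f (L v + c)}, ?_, ?_⟩
  · rintro g ⟨f, hf, rfl⟩
    exact polyFuns_comp L c (hS f hf)
  · ext v
    constructor
    · rintro h g ⟨f, hf, rfl⟩
      exact h f hf
    · intro h f hf
      exact h _ ⟨f, hf, rfl⟩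

theorem IsZClosed.iInter' {K V ι : Type*} [Field K] [AddCommGroup V] [Module K V]
    (Z : ι → Set V) (hZ : ∀ i, IsZClosed K (Z i)) : IsZClosed K {v | ∀ i, v ∈ Z i} := by
  choose S hS hZS using hZ
  refine ⟨{f | ∃ i, f ∈ S i}, ?_, ?_⟩
  · rintro f ⟨i, hf⟩
    exact hS i f hf
  · ext v
    constructor
    · rintro h f ⟨i, hf⟩
      have := h i
      rw [hZS i] at this
      exact this f hf
    · intro h i
      rw [hZS i]
      exact fun f hf => h f ⟨i, hf⟩

theorem isZClosed_cons_left {K E : Type*} [Field K] [AddCommGroup E] [Module K E] {k : ℕ}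
    {Z : Set (Fin (k + 1) → E)} (hZ : IsZClosed K Z) (x : Fin k → E) :
    IsZClosed K {y : E | (Fin.cons y x : Fin (k + 1) → E) ∈ Z} := by
  have := hZ.preimage_affine (LinearMap.single K (fun _ : Fin (k + 1) => E) 0)
    (Fin.cons 0 x : Fin (k + 1) → E)
  convert this using 4 with y
  ext i
  refine Fin.cases ?_ (fun j => ?_) i <;> simp

theorem isZClosed_cons_right {K E : Type*} [Field K] [AddCommGroup E] [Module K E] {k : ℕ}
    {Z : Set (Fin (k + 1) → E)} (hZ : IsZClosed K Z) (y : E) :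
    IsZClosed K {x : Fin k → E | (Fin.cons y x : Fin (k + 1) → E) ∈ Z} := by
  have := hZ.preimage_affine
    (LinearMap.pi (Fin.cons 0 (fun j => LinearMap.proj j) :
      Fin (k + 1) → ((Fin k → E) →ₗ[K] E)))
    (Fin.cons y 0 : Fin (k + 1) → E)
  convert this using 4 with x
  ext i
  refine Fin.cases ?_ (fun j => ?_) i <;> simp

theorem irred_pow_aux {K E : Type*} [Field K] [AddCommGroup E] [Module K E] {V : Set E}
    (hirr : IsIrredVariety K V) (k : ℕ) :
    ∀ Z₁ Z₂ : Set (Fin k → E), IsZClosed K Z₁ → IsZClosed K Z₂ →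
      {x : Fin k → E | ∀ t, x t ∈ V} ⊆ Z₁ ∪ Z₂ →
      ({x : Fin k → E | ∀ t, x t ∈ V} ⊆ Z₁ ∨ {x : Fin k → E | ∀ t, x t ∈ V} ⊆ Z₂) := by
  induction k with
  | zero =>
    intro Z₁ Z₂ _ _ h
    rcases h (show (fun i => i.elim0 : Fin 0 → E) ∈ _ from fun t => t.elim0) with h | h
    · left
      intro x _
      rwa [Subsingleton.elim x]
    · right
      intro x _
      rwa [Subsingleton.elim x]
  | succ k ih =>
    intro Z₁ Z₂ h₁ h₂ h
    have key : ∀ Z : Set (Fin (k + 1) → E), IsZClosed K Z →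
        IsZClosed K {y : E | ∀ x : {x : Fin k → E // ∀ t, x t ∈ V},
          y ∈ {y : E | (Fin.cons y x.1 : Fin (k + 1) → E) ∈ Z}} := fun Z hZ =>
      IsZClosed.iInter' _ (fun x => isZClosed_cons_left hZ x.1)
    have fin : ∀ Z : Set (Fin (k + 1) → E),
        V ⊆ {y : E | ∀ x : {x : Fin k → E // ∀ t, x t ∈ V},
          y ∈ {y : E | (Fin.cons y x.1 : Fin (k + 1) → E) ∈ Z}} →
        {x : Fin (k + 1) → E | ∀ t, x t ∈ V} ⊆ Z := by
      intro Z hZ x hx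
      have := hZ (hx 0) ⟨Fin.tail x, fun t => hx t.succ⟩
      simpa using this
    refine (hirr.2.2 _ _ (key Z₁ h₁) (key Z₂ h₂) ?_).imp (fin Z₁) (fin Z₂)
    intro y hy
    refine (ih _ _ (isZClosed_cons_right h₁ y) (isZClosed_cons_right h₂ y) ?_).imp
      (fun h x => h x.2) (fun h x => h x.2)
    intro x hx
    refine h (show ∀ t, (Fin.cons y x : Fin (k + 1) → E) t ∈ V from ?_)
    intro t
    refine Fin.cases ?_ (fun j => ?_) t
    · simpa using hy
    · simpa using hx j

/-- If `V ⊆ 𝔸ⁿ_K` is an irreducible affine variety, the zero set of a prime ideal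
`P ⊆ K[Y_1,…,Y_n]`, and `K` is algebraically closed or `P` is homogeneous, then for
every `r ≥ 1` the product `V^r ⊆ 𝔸^{rn}_K` is irreducible. -/
theorem product_of_irreducible_variety_is_irreducible
    {K : Type*} [Field K] (n : ℕ) (P : Ideal (MvPolynomial (Fin n) K)) (hP : P.IsPrime)
    (V : Set (Fin n → K))
    (hV : V = {x | ∀ p ∈ P, MvPolynomial.eval x p = 0})
    (hirr : IsIrredVariety K V)
    (hyp : IsAlgClosed K ∨
      ∃ S : Set (MvPolynomial (Fin n) K),
        (∀ p ∈ S, ∃ m : ℕ, p.IsHomogeneous m) ∧ P = Ideal.span S)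
    (r : ℕ) (hr : 1 ≤ r) :
    IsIrredVariety K {x : Fin r → Fin n → K | ∀ t, x t ∈ V} := by
  refine ⟨?_, ?_, irred_pow_aux hirr r⟩
  · refine IsZClosed.iInter' (fun t => {x : Fin r → Fin n → K | x t ∈ V}) (fun t => ?_)
    simpa using hirr.1.preimage_affine
      (LinearMap.proj t : (Fin r → Fin n → K) →ₗ[K] (Fin n → K)) 0
  · obtain ⟨v, hv⟩ := hirr.2.1
    exact ⟨fun _ => v, fun _ => hv⟩
end
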